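/- Let 1 < r < 2 and A_r > 0, and assume that for every weight w and every f with ∫_ℝ |f| M_r w dx < ∞ one has sup_{λ>0} λ·w({x : |Hf(x)| > λ}) ≤ A_r ∫_ℝ |f| M_r w dx. Let α_r = r/(2−r). Then there is an absolute constant c > 0 (independent of r) such that for any weight w supported in [0,1]: ∫_0^1 (|Hw(x)|/(M_{α_r}w(x))^{α_r/r})² · w(x)^{α_r} dx ≤ c·A_r² ∫_0^1 w dx. -/

import Mathlib

open MeasureTheory Set Filter Topology
open scoped ENNReal

noncomputable section

namespace RT

/-- The Hilbert transform `Hf(x)`, defined as the principal-value limit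
`lim_{ε→0⁺} ∫_{|x-y|>ε} f(y)/(x-y) dy` (junk value at points where the limit
does not exist). -/
def Hil (f : ℝ → ℝ) (x : ℝ) : ℝ :=
  limUnder (𝓝[>] (0 : ℝ)) fun ε => ∫ y in {y : ℝ | ε < |x - y|}, f y / (x - y)

/-- The (uncentered) Hardy–Littlewood maximal function over bounded intervals:
`Mf(x) = sup_{I ∋ x} (1/|I|) ∫_I |f|`. -/
def HLMax (f : ℝ → ℝ) (x : ℝ) : ℝ≥0∞ :=
  ⨆ (a : ℝ) (b : ℝ) (_ : a < b) (_ : x ∈ Icc a b),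
    (ENNReal.ofReal (b - a))⁻¹ * ∫⁻ y in Ioo a b, ENNReal.ofReal |f y|

/-- `M_r f = (M(|f|^r))^{1/r}`. -/
def Mr (r : ℝ) (f : ℝ → ℝ) (x : ℝ) : ℝ≥0∞ :=
  HLMax (fun y => |f y| ^ r) x ^ (1 / r)

/-- The Orlicz maximal operator
`M_Φ f(x) = sup_{I ∋ x} inf {λ > 0 : (1/|I|) ∫_I Φ(|f|/λ) ≤ 1}`. -/
def MOrlicz (Φ : ℝ → ℝ) (f : ℝ → ℝ) (x : ℝ) : ℝ≥0∞ :=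
  ⨆ (a : ℝ) (b : ℝ) (_ : a < b) (_ : x ∈ Icc a b),
    sInf {lam : ℝ≥0∞ | ∃ l : ℝ, 0 < l ∧ lam = ENNReal.ofReal l ∧
      (∫⁻ y in Ioo a b, ENNReal.ofReal (Φ (|f y| / l))) ≤ ENNReal.ofReal (b - a)}

/-- The centered maximal operator with respect to a weight `v`:
`M^c_v h(x) = sup_{ρ>0} (1/v(B(x,ρ))) ∫_{B(x,ρ)} |h| v`. -/
def Mc (v h : ℝ → ℝ) (x : ℝ) : ℝ≥0∞ :=
  ⨆ (ρ : ℝ) (_ : 0 < ρ),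
    (∫⁻ y in Ioo (x - ρ) (x + ρ), ENNReal.ofReal (v y))⁻¹ *
      ∫⁻ y in Ioo (x - ρ) (x + ρ), ENNReal.ofReal |h y| * ENNReal.ofReal (v y)

/-- A Young function: convex, increasing, `Φ(0) = 0`, `Φ(t)/t → ∞`. -/
structure IsYoung (Φ : ℝ → ℝ) : Prop where
  convexOn : ConvexOn ℝ (Ici 0) Φ
  mono : MonotoneOn Φ (Ici 0)
  map_zero : Φ 0 = 0
  superlinear : Tendsto (fun t => Φ t / t) atTop atTop

/-- A weight: a nonnegative locally integrable function on `ℝ`. -/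
def IsWeight (w : ℝ → ℝ) : Prop :=
  (∀ x, 0 ≤ w x) ∧ LocallyIntegrable w volume

/-! Triadic machinery: intervals are represented by their endpoint pairs,
`(a, b)` corresponding to `[a, b)`. -/

/-- The length of the interval. -/
def len (I : ℝ × ℝ) : ℝ := I.2 - I.1

/-- The set `[a, b)` of the interval `I = (a, b)`. -/
def ivl (I : ℝ × ℝ) : Set ℝ := Ico I.1 I.2

/-- A triadic interval `[3^j n, 3^j (n+1))`, `j, n ∈ ℤ`. -/
def IsTriadic (I : ℝ × ℝ) : Prop :=
  ∃ j n : ℤ, I.1 = (3 : ℝ) ^ j * n ∧ I.2 = (3 : ℝ) ^ j * (n + 1)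

/-- The middle third `I^Δ` of `I`: same center, one third of the length. -/
def mid (I : ℝ × ℝ) : ℝ × ℝ := (I.1 + (I.2 - I.1) / 3, I.2 - (I.2 - I.1) / 3)

/-- `P` assigns to each triadic interval `J ⊆ [0,1)` a triadic interval
adjacent to `J^Δ` (on its left or on its right) with `|P J| = 3^{-k} |J|`. -/
def GoodP (k : ℕ) (P : ℝ × ℝ → ℝ × ℝ) : Prop :=
  ∀ J : ℝ × ℝ, IsTriadic J → ivl J ⊆ Ico (0 : ℝ) 1 →
    IsTriadic (P J) ∧ len (P J) = len J / 3 ^ k ∧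
      ((P J).2 = (mid J).1 ∨ (P J).1 = (mid J).2)

/-- The families `𝒥_l`: `𝒥_1 = {[0,1)}`, and `𝒥_{l+1}` consists of the `3^{k-1}`
triadic subintervals of `J^Δ` of length `|J|/3^k`, for each `J ∈ 𝒥_l`.
(`𝒥_0` is empty.) -/
def Jfam (k : ℕ) : ℕ → Set (ℝ × ℝ)
  | 0 => ∅
  | 1 => {((0 : ℝ), (1 : ℝ))}
  | l + 2 => {J' | IsTriadic J' ∧ ∃ J ∈ Jfam k (l + 1),
      len J' = len J / 3 ^ k ∧ ivl J' ⊆ ivl (mid J)}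

/-- The families `ℐ_l = {P J : J ∈ 𝒥_l}`. -/
def Ifam (k : ℕ) (P : ℝ × ℝ → ℝ × ℝ) (l : ℕ) : Set (ℝ × ℝ) :=
  P '' Jfam k l

/-- `Ω_l = ⋃_{I ∈ ℐ_l} I`. -/
def Omega (k : ℕ) (P : ℝ × ℝ → ℝ × ℝ) (l : ℕ) : Set ℝ :=
  ⋃ I ∈ Ifam k P l, ivl I

/-- The constant `3^k / (3^{k-1} + 1)`. -/
def alpha (k : ℕ) : ℝ := 3 ^ k / (3 ^ (k - 1) + 1)

/-- The Reguera–Thiele weight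
`w_k = ∑_{l=1}^∞ (3^k/(3^{k-1}+1))^l χ_{Ω_l}`. -/
def wk (k : ℕ) (P : ℝ × ℝ → ℝ × ℝ) (x : ℝ) : ℝ :=
  ∑' l : ℕ, alpha k ^ (l + 1) * (Omega k P (l + 1)).indicator (fun _ => (1 : ℝ)) x

/-!
Let `W ≥ 0` be a Lipschitz function with compact support, and put
`u = W^{2r-1} / M(W^{2r-1})²`. With `ν = W^{2r-1} dx` and `M_ν` the maximal operator of `ν`,
`M_r(1_E W)^{2r} u ≤ W^{2r-1} M_ν(1_E W^{1-r})²`, so the `L²(ν)` bound for `M_ν`, which holds on the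
line with an absolute constant for every finite measure, gives `∫ M_r(1_E W)^{2r} u ≤ 16 W(E)`.

Apply the hypothesis to the weight `1_E W` with `E = {|Hf| > λ}`. Hölder's inequality bounds its
right-hand side by `(∫ |f|^p u^{1-p})^{1/p} W(E)^{1/(2r)}`, where `p` is conjugate to `2r`, and
integrating the resulting bound for `W(E)` in `λ` (Kolmogorov) gives
`∫ |Hf| W ≤ 16 A (∫ |f|^p u^{1-p})^{1/p} W(ℝ)^{1/(2r)}`. By the antisymmetry of `H` this bounds the
pairing of `f` with `HW`, and the extremal `f` turns it into
`∫ |HW|^{2r} u ≤ (16 A)^{2r} ∫ W`. Hölder's inequality with exponents `r, r'` and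
`M_{2r-1} ≤ M_{r/(2-r)}` then yield the `L²` estimate for `W`. Working in `L^{2r}` until the last
step is what keeps the constant bounded as `r → 2`.

A general integrable weight is a limit of such `W` by Fatou's lemma. The almost everywhere
convergence of `HW` comes from the weak type `(1,1)` bound, which is the hypothesis for `w = 1`.
-/

section MaximalQuotient

/-- The uncentered maximal quotient of `μ` by `ν` over open intervals. It covers both the
Hardy–Littlewood maximal function (`ν = dx`) and maximal functions relative to a weighted
measure `ν`; intervals with `ν I = 0 < μ I` contribute `∞`. -/
def maxQuotient (μ ν : Measure ℝ) (x : ℝ) : ℝ≥0∞ :=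
  ⨆ (a : ℝ) (b : ℝ) (_ : x ∈ Ioo a b), μ (Ioo a b) / ν (Ioo a b)

lemma le_maxQuotient (μ ν : Measure ℝ) {a b x : ℝ} (hx : x ∈ Ioo a b) :
    μ (Ioo a b) / ν (Ioo a b) ≤ maxQuotient μ ν x :=
  le_iSup_of_le a (le_iSup_of_le b (le_iSup_of_le hx le_rfl))

lemma maxQuotient_le_mul_maxQuotient (κ ν μ : Measure ℝ) [IsLocallyFiniteMeasure ν]
    (hκ : κ ≪ ν) (x : ℝ) : maxQuotient κ μ x ≤ maxQuotient ν μ x * maxQuotient κ ν x := by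
  refine iSup_le fun a => iSup_le fun b => iSup_le fun hx => ?_
  by_cases hν : ν (Ioo a b) = 0
  · simp [hκ hν]
  · calc κ (Ioo a b) / μ (Ioo a b)
        = ν (Ioo a b) * (κ (Ioo a b) / ν (Ioo a b)) / μ (Ioo a b) := by
          rw [ENNReal.mul_div_cancel hν measure_Ioo_lt_top.ne]
      _ = ν (Ioo a b) / μ (Ioo a b) * (κ (Ioo a b) / ν (Ioo a b)) := ENNReal.mul_div_right_comm
      _ ≤ maxQuotient ν μ x * maxQuotient κ ν x :=
          mul_le_mul' (le_maxQuotient ν μ hx) (le_maxQuotient κ ν hx)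

/-- Among three intervals through a point, the one that reaches neither furthest left nor furthest
right is covered by the other two. -/
lemma exists_erase_biUnion_Ioo_subset (s : Finset (ℝ × ℝ)) (x : ℝ)
    (hx : 2 < (s.filter fun p => x ∈ Ioo p.1 p.2).card) :
    ∃ K ∈ s, ⋃ p ∈ s, Ioo p.1 p.2 ⊆ ⋃ p ∈ s.erase K, Ioo p.1 p.2 := by
  set t := s.filter fun p => x ∈ Ioo p.1 p.2
  have mem_t : ∀ p ∈ t, p ∈ s ∧ x ∈ Ioo p.1 p.2 := fun p hp => Finset.mem_filter.1 hp
  have ht : t.Nonempty := Finset.card_pos.1 (by omega)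
  obtain ⟨I, hI, hI_min⟩ := t.exists_min_image Prod.fst ht
  obtain ⟨J, hJ, hJ_max⟩ := t.exists_max_image Prod.snd ht
  obtain ⟨K, hK, hK_notMem⟩ : ∃ K ∈ t, K ∉ ({I, J} : Finset (ℝ × ℝ)) :=
    Finset.exists_mem_notMem_of_card_lt_card (Finset.card_le_two.trans_lt hx)
  simp only [Finset.mem_insert, Finset.mem_singleton, not_or] at hK_notMem
  refine ⟨K, (mem_t K hK).1, fun y hy => ?_⟩
  simp only [mem_iUnion, exists_prop, Finset.mem_erase] at hy ⊢
  obtain ⟨p, hp, hyp⟩ := hy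
  by_cases hpK : p = K
  · subst hpK
    rcases le_total y x with hyx | hxy
    · exact ⟨I, ⟨Ne.symm hK_notMem.1, (mem_t I hI).1⟩, (hI_min p hK).trans_lt hyp.1,
        hyx.trans_lt (mem_t I hI).2.2⟩
    · exact ⟨J, ⟨Ne.symm hK_notMem.2, (mem_t J hJ).1⟩, (mem_t J hJ).2.1.trans_le hxy,
        hyp.2.trans_le (hJ_max p hK)⟩
  · exact ⟨p, ⟨hpK, hp⟩, hyp⟩

lemma exists_subset_biUnion_Ioo_overlap_le_two (s : Finset (ℝ × ℝ)) :
    ∃ t ⊆ s, ⋃ p ∈ s, Ioo p.1 p.2 ⊆ ⋃ p ∈ t, Ioo p.1 p.2 ∧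
      ∀ x : ℝ, (t.filter fun p => x ∈ Ioo p.1 p.2).card ≤ 2 := by
  induction s using Finset.strongInduction with
  | H s ih =>
    by_cases h : ∀ x : ℝ, (s.filter fun p => x ∈ Ioo p.1 p.2).card ≤ 2
    · exact ⟨s, Finset.Subset.refl s, Subset.rfl, h⟩
    push Not at h
    obtain ⟨x, hx⟩ := h
    obtain ⟨K, hK, hcover⟩ := exists_erase_biUnion_Ioo_subset s x hx
    obtain ⟨t, ht, hcover', hoverlap⟩ := ih _ (Finset.erase_ssubset hK)
    exact ⟨t, ht.trans (Finset.erase_subset K s), hcover.trans hcover', hoverlap⟩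

lemma sum_measure_Ioo_le_of_overlap_le_two (μ : Measure ℝ) (s : Finset (ℝ × ℝ))
    (h : ∀ x : ℝ, (s.filter fun p => x ∈ Ioo p.1 p.2).card ≤ 2) :
    ∑ p ∈ s, μ (Ioo p.1 p.2) ≤ 2 * μ univ := by
  calc ∑ p ∈ s, μ (Ioo p.1 p.2)
      = ∑ p ∈ s, ∫⁻ x, (Ioo p.1 p.2).indicator 1 x ∂μ := by
        simp only [lintegral_indicator_one measurableSet_Ioo]
    _ = ∫⁻ x, ∑ p ∈ s, (Ioo p.1 p.2).indicator 1 x ∂μ :=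
        (lintegral_finsetSum _ fun p _ => measurable_one.indicator measurableSet_Ioo).symm
    _ = ∫⁻ x, ((s.filter fun p => x ∈ Ioo p.1 p.2).card : ℝ≥0∞) ∂μ := by
        simp only [indicator_apply, Pi.one_apply, Finset.sum_boole]
    _ ≤ ∫⁻ _, 2 ∂μ := lintegral_mono fun x => Nat.cast_le_ofNat.2 (h x)
    _ = 2 * μ univ := lintegral_const 2

lemma setOf_lt_maxQuotient (μ ν : Measure ℝ) (t : ℝ≥0∞) :
    {x | t < maxQuotient μ ν x} =
      ⋃ p ∈ {p : ℝ × ℝ | t < μ (Ioo p.1 p.2) / ν (Ioo p.1 p.2)}, Ioo p.1 p.2 := by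
  ext x
  simp only [maxQuotient, mem_ofPred_eq, lt_iSup_iff, mem_iUnion, exists_prop, Prod.exists,
    and_comm]

lemma isOpen_setOf_lt_maxQuotient (μ ν : Measure ℝ) (t : ℝ≥0∞) :
    IsOpen {x | t < maxQuotient μ ν x} := by
  rw [setOf_lt_maxQuotient]
  exact isOpen_biUnion fun p _ => isOpen_Ioo

lemma measurable_maxQuotient (μ ν : Measure ℝ) : Measurable (maxQuotient μ ν) :=
  measurable_of_Ioi fun t => (isOpen_setOf_lt_maxQuotient μ ν t).measurableSet

theorem mul_measure_lt_maxQuotient_le (μ ν : Measure ℝ) [IsLocallyFiniteMeasure ν] (t : ℝ≥0∞) :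
    t * ν {x | t < maxQuotient μ ν x} ≤ 2 * μ univ := by
  simp only [(isOpen_setOf_lt_maxQuotient μ ν t).measure_eq_iSup_isCompact, ENNReal.mul_iSup]
  refine iSup_le fun K => iSup_le fun hK_sub => iSup_le fun hK => ?_
  rw [setOf_lt_maxQuotient] at hK_sub
  obtain ⟨b, hb, hb_fin, hK_cover⟩ := hK.elim_finite_subcover_image (fun p _ => isOpen_Ioo) hK_sub
  obtain ⟨s, hs, hcover, hoverlap⟩ :=
    exists_subset_biUnion_Ioo_overlap_le_two hb_fin.toFinset
  have hK_s : K ⊆ ⋃ p ∈ s, Ioo p.1 p.2 := Subset.trans (by simpa using hK_cover) hcover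
  calc t * ν K ≤ t * ∑ p ∈ s, ν (Ioo p.1 p.2) := by
        gcongr
        exact (measure_mono hK_s).trans (measure_biUnion_finset_le _ _)
    _ = ∑ p ∈ s, t * ν (Ioo p.1 p.2) := Finset.mul_sum _ _ _
    _ ≤ ∑ p ∈ s, μ (Ioo p.1 p.2) := by
        refine Finset.sum_le_sum fun p hp => ENNReal.mul_le_of_le_div ?_
        exact (hb (by simpa using hs hp)).le
    _ ≤ 2 * μ univ := sum_measure_Ioo_le_of_overlap_le_two μ s hoverlap

lemma maxQuotient_withDensity_le_add (ν : Measure ℝ) {g h : ℝ → ℝ≥0∞} {t : ℝ≥0∞}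
    (hgh : ∀ x, h x ≤ g x + t) (x : ℝ) :
    maxQuotient (ν.withDensity h) ν x ≤ maxQuotient (ν.withDensity g) ν x + t := by
  refine iSup_le fun a => iSup_le fun b => iSup_le fun hx => ?_
  calc ν.withDensity h (Ioo a b) / ν (Ioo a b)
      ≤ (ν.withDensity g (Ioo a b) + t * ν (Ioo a b)) / ν (Ioo a b) := by
        gcongr
        simp only [withDensity_apply _ measurableSet_Ioo]
        calc ∫⁻ y in Ioo a b, h y ∂ν ≤ ∫⁻ y in Ioo a b, (g y + t) ∂ν :=
              lintegral_mono fun y => hgh y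
          _ = ∫⁻ y in Ioo a b, g y ∂ν + t * ν (Ioo a b) := by
              rw [lintegral_add_right _ measurable_const, setLIntegral_const]
    _ = ν.withDensity g (Ioo a b) / ν (Ioo a b) + t * ν (Ioo a b) / ν (Ioo a b) := ENNReal.add_div
    _ ≤ maxQuotient (ν.withDensity g) ν x + t := by
        gcongr
        · exact le_maxQuotient _ _ hx
        · exact ENNReal.div_le_of_le_mul le_rfl

lemma mul_measure_two_mul_lt_maxQuotient_le (ν : Measure ℝ) [IsLocallyFiniteMeasure ν]
    {h : ℝ → ℝ≥0∞} (hh : Measurable h) (t : ℝ≥0∞) :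
    t * ν {x | 2 * t < maxQuotient (ν.withDensity h) ν x} ≤ 2 * ∫⁻ x in {x | t < h x}, h x ∂ν := by
  set g := {x | t < h x}.indicator h
  have h_le : ∀ x, h x ≤ g x + t := fun x => by
    by_cases hx : t < h x
    · simp [g, hx]
    · exact (not_lt.1 hx).trans le_add_self
  have hsub : {x | 2 * t < maxQuotient (ν.withDensity h) ν x} ⊆
      {x | t < maxQuotient (ν.withDensity g) ν x} := fun x hx => by
    rw [mem_ofPred_eq, two_mul] at hx
    exact lt_of_add_lt_add_right (hx.trans_le (maxQuotient_withDensity_le_add ν h_le x))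
  calc t * ν {x | 2 * t < maxQuotient (ν.withDensity h) ν x}
      ≤ t * ν {x | t < maxQuotient (ν.withDensity g) ν x} := by gcongr
    _ ≤ 2 * ν.withDensity g univ := mul_measure_lt_maxQuotient_le _ _ _
    _ = 2 * ∫⁻ x in {x | t < h x}, h x ∂ν := by
      rw [withDensity_apply _ MeasurableSet.univ, Measure.restrict_univ,
        lintegral_indicator (measurableSet_lt measurable_const hh)]

end MaximalQuotient

section LayerCake

lemma setOf_pos_ofReal_lt_top : {s : ℝ | 0 < s ∧ ENNReal.ofReal s < ⊤} = Ioi 0 := by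
  ext s
  simp

lemma setOf_pos_ofReal_lt_coe (F : NNReal) :
    {s : ℝ | 0 < s ∧ ENNReal.ofReal s < F} = Ioo 0 (F : ℝ) := by
  ext s
  refine and_congr_right fun hs => ?_
  rw [ENNReal.ofReal, ENNReal.coe_lt_coe, Real.toNNReal_lt_iff_lt_coe hs.le]

lemma volume_setOf_pos_ofReal_lt (F : ℝ≥0∞) :
    volume {s : ℝ | 0 < s ∧ ENNReal.ofReal s < F} = F := by
  cases F with
  | top => rw [setOf_pos_ofReal_lt_top, Real.volume_Ioi]
  | coe F => rw [setOf_pos_ofReal_lt_coe, Real.volume_Ioo, sub_zero, ENNReal.ofReal_coe_nnreal]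

lemma setLIntegral_two_mul_ofReal_lt (F : ℝ≥0∞) :
    ∫⁻ s in {s : ℝ | 0 < s ∧ ENNReal.ofReal s < F}, ENNReal.ofReal (2 * s) = F ^ 2 := by
  cases F with
  | top =>
    rw [setOf_pos_ofReal_lt_top, ENNReal.top_pow two_ne_zero, eq_top_iff]
    calc (⊤ : ℝ≥0∞) = ∫⁻ _ in Ioi (1 : ℝ), 1 := by simp
      _ ≤ ∫⁻ s in Ioi (1 : ℝ), ENNReal.ofReal (2 * s) :=
          setLIntegral_mono' measurableSet_Ioi fun s hs =>
            ENNReal.one_le_ofReal.2 (by linarith [mem_Ioi.1 hs])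
      _ ≤ _ := lintegral_mono_set (Ioi_subset_Ioi zero_le_one)
  | coe F =>
    rw [setOf_pos_ofReal_lt_coe, restrict_Ioo_eq_restrict_Ioc,
      ← ofReal_integral_eq_lintegral_ofReal]
    · rw [← intervalIntegral.integral_of_le F.coe_nonneg, intervalIntegral.integral_const_mul,
        integral_id, ← ENNReal.ofReal_coe_nnreal, ← ENNReal.ofReal_pow F.coe_nonneg]
      congr 1
      ring
    · exact (intervalIntegral.intervalIntegrable_id.const_mul 2).1
    · exact (ae_restrict_iff' measurableSet_Ioc).2
        (Eventually.of_forall fun s hs => by simpa using hs.1.le)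

lemma lintegral_mul_setLIntegral_ofReal_lt {X : Type*} [MeasurableSpace X] (ν : Measure X)
    [SFinite ν] {f F : X → ℝ≥0∞} (hf : Measurable f) (hF : Measurable F) {φ : ℝ → ℝ≥0∞}
    (hφ : Measurable φ) :
    ∫⁻ x, f x * (∫⁻ s in {s : ℝ | 0 < s ∧ ENNReal.ofReal s < F x}, φ s) ∂ν =
      ∫⁻ s in Ioi (0 : ℝ), φ s * ∫⁻ x in {x | ENNReal.ofReal s < F x}, f x ∂ν := by
  have hset : MeasurableSet {p : X × ℝ | ENNReal.ofReal p.2 < F p.1} :=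
    measurableSet_lt (by fun_prop) (by fun_prop)
  set G : X → ℝ → ℝ≥0∞ := fun x s =>
    {p : X × ℝ | ENNReal.ofReal p.2 < F p.1}.indicator (fun p => f p.1 * φ p.2) (x, s)
  have hG : Measurable (Function.uncurry G) :=
    Measurable.indicator (by fun_prop) hset
  have hG_left : ∀ x, f x * ∫⁻ s in {s : ℝ | 0 < s ∧ ENNReal.ofReal s < F x}, φ s =
      ∫⁻ s in Ioi (0 : ℝ), G x s := fun x => by
    have hx : MeasurableSet {s : ℝ | ENNReal.ofReal s < F x} :=
      measurableSet_lt (by fun_prop) measurable_const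
    rw [show {s : ℝ | 0 < s ∧ ENNReal.ofReal s < F x} = {s | ENNReal.ofReal s < F x} ∩ Ioi 0 from
      inter_comm _ _, ← lintegral_const_mul _ hφ, ← setLIntegral_indicator hx]
    rfl
  have hG_right : ∀ s, φ s * ∫⁻ x in {x | ENNReal.ofReal s < F x}, f x ∂ν =
      ∫⁻ x, G x s ∂ν := fun s => by
    rw [← lintegral_const_mul _ hf, ← lintegral_indicator (measurableSet_lt measurable_const hF)]
    exact lintegral_congr fun x => by simp only [G, indicator_apply, mem_ofPred_eq, mul_comm]
  simp only [hG_left, hG_right]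
  exact lintegral_lintegral_swap hG.aemeasurable

lemma ofReal_two_mul_mul_measure_lt_maxQuotient_le (ν : Measure ℝ) [IsLocallyFiniteMeasure ν]
    {h : ℝ → ℝ≥0∞} (hh : Measurable h) (s : ℝ) :
    ENNReal.ofReal (2 * s) * ν {x | ENNReal.ofReal s < maxQuotient (ν.withDensity h) ν x} ≤
      8 * ∫⁻ x in {x | ENNReal.ofReal s < 2 * h x}, h x ∂ν := by
  have hs_half : 2 * ENNReal.ofReal (s / 2) = ENNReal.ofReal s := by
    rw [← ENNReal.ofReal_ofNat, ← ENNReal.ofReal_mul zero_le_two, mul_div_cancel₀ s two_ne_zero]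
  have hs_two : ENNReal.ofReal (2 * s) = 4 * ENNReal.ofReal (s / 2) := by
    rw [← ENNReal.ofReal_ofNat, ← ENNReal.ofReal_mul (by norm_num)]
    congr 1
    ring
  have hset : {x | ENNReal.ofReal (s / 2) < h x} = {x | ENNReal.ofReal s < 2 * h x} := by
    simp only [← hs_half, ENNReal.mul_lt_mul_iff_right two_ne_zero ENNReal.ofNat_ne_top]
  have hweak := mul_measure_two_mul_lt_maxQuotient_le ν hh (ENNReal.ofReal (s / 2))
  rw [hs_half, hset] at hweak
  rw [hs_two, mul_assoc]
  calc 4 * (ENNReal.ofReal (s / 2) * ν {x | ENNReal.ofReal s < maxQuotient (ν.withDensity h) ν x})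
      ≤ 4 * (2 * ∫⁻ x in {x | ENNReal.ofReal s < 2 * h x}, h x ∂ν) := by gcongr
    _ = 8 * ∫⁻ x in {x | ENNReal.ofReal s < 2 * h x}, h x ∂ν := by rw [← mul_assoc]; norm_num

theorem lintegral_maxQuotient_sq_le (ν : Measure ℝ) [IsLocallyFiniteMeasure ν]
    {h : ℝ → ℝ≥0∞} (hh : Measurable h) :
    ∫⁻ x, maxQuotient (ν.withDensity h) ν x ^ 2 ∂ν ≤ 16 * ∫⁻ x, h x ^ 2 ∂ν := by
  set N := maxQuotient (ν.withDensity h) ν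
  have hN : Measurable N := measurable_maxQuotient _ _
  calc ∫⁻ x, N x ^ 2 ∂ν
      = ∫⁻ x, 1 * (∫⁻ s in {s : ℝ | 0 < s ∧ ENNReal.ofReal s < N x},
          ENNReal.ofReal (2 * s)) ∂ν := by
        simp only [setLIntegral_two_mul_ofReal_lt, one_mul]
    _ = ∫⁻ s in Ioi (0 : ℝ), ENNReal.ofReal (2 * s) *
          ∫⁻ _ in {x | ENNReal.ofReal s < N x}, 1 ∂ν :=
        lintegral_mul_setLIntegral_ofReal_lt ν measurable_const hN (by fun_prop)
    _ ≤ ∫⁻ s in Ioi (0 : ℝ), 8 * (1 * ∫⁻ x in {x | ENNReal.ofReal s < 2 * h x}, h x ∂ν) :=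
        lintegral_mono fun s => by
          simpa only [setLIntegral_one, one_mul] using
            ofReal_two_mul_mul_measure_lt_maxQuotient_le ν hh s
    _ = 8 * ∫⁻ x, h x * (∫⁻ _ in {s : ℝ | 0 < s ∧ ENNReal.ofReal s < 2 * h x}, 1) ∂ν := by
        rw [lintegral_const_mul' _ _ (by simp), lintegral_mul_setLIntegral_ofReal_lt ν hh
          (hh.const_mul 2) measurable_const]
    _ = 8 * ∫⁻ x, 2 * h x ^ 2 ∂ν := by
        simp only [setLIntegral_one, volume_setOf_pos_ofReal_lt, mul_left_comm _ (2 : ℝ≥0∞), sq]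
    _ = 16 * ∫⁻ x, h x ^ 2 ∂ν := by
        rw [lintegral_const_mul _ (hh.pow_const 2), ← mul_assoc]
        norm_num

end LayerCake

section HardyLittlewood

lemma average_le_HLMax (f : ℝ → ℝ) {a b x : ℝ} (hab : a < b) (hx : x ∈ Icc a b) :
    (ENNReal.ofReal (b - a))⁻¹ * ∫⁻ y in Ioo a b, ENNReal.ofReal |f y| ≤ HLMax f x :=
  le_iSup_of_le a (le_iSup_of_le b (le_iSup_of_le hab (le_iSup_of_le hx le_rfl)))

lemma HLMax_eq_maxQuotient (f : ℝ → ℝ) :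
    HLMax f = maxQuotient (volume.withDensity fun y => ENNReal.ofReal |f y|) volume := by
  set μ := volume.withDensity fun y => ENNReal.ofReal |f y|
  have hμ : ∀ a b, ∫⁻ y in Ioo a b, ENNReal.ofReal |f y| = μ (Ioo a b) := fun a b =>
    (withDensity_apply _ measurableSet_Ioo).symm
  funext x
  apply le_antisymm
  · refine iSup_le fun a => iSup_le fun b => iSup_le fun _ => iSup_le fun hx => ?_
    have hlim : Tendsto (fun ε : ℝ => (ENNReal.ofReal (b + ε - (a - ε)))⁻¹ * μ (Ioo a b))
        (𝓝[>] 0) (𝓝 ((ENNReal.ofReal (b - a))⁻¹ * μ (Ioo a b))) := by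
      refine ENNReal.Tendsto.mul_const ?_ (Or.inl (by simp))
      refine tendsto_inv_iff.2 (ENNReal.tendsto_ofReal ?_)
      have hcont : Continuous fun ε : ℝ => b + ε - (a - ε) := by fun_prop
      simpa using (hcont.tendsto 0).mono_left nhdsWithin_le_nhds
    rw [hμ]
    refine le_of_tendsto hlim (eventually_mem_nhdsWithin.mono fun ε hε => ?_)
    have hε : 0 < ε := hε
    calc (ENNReal.ofReal (b + ε - (a - ε)))⁻¹ * μ (Ioo a b)
        ≤ (ENNReal.ofReal (b + ε - (a - ε)))⁻¹ * μ (Ioo (a - ε) (b + ε)) := by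
          gcongr <;> linarith
      _ = μ (Ioo (a - ε) (b + ε)) / volume (Ioo (a - ε) (b + ε)) := by
          rw [Real.volume_Ioo, mul_comm, div_eq_mul_inv]
      _ ≤ maxQuotient μ volume x :=
          le_maxQuotient _ _ ⟨by linarith [hx.1], by linarith [hx.2]⟩
  · refine iSup_le fun a => iSup_le fun b => iSup_le fun hx => ?_
    rw [Real.volume_Ioo, div_eq_mul_inv, mul_comm, ← hμ]
    exact average_le_HLMax f (hx.1.trans hx.2) ⟨hx.1.le, hx.2.le⟩

lemma measurable_HLMax (f : ℝ → ℝ) : Measurable (HLMax f) := by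
  rw [HLMax_eq_maxQuotient]
  exact measurable_maxQuotient _ _

lemma measurable_Mr (r : ℝ) (f : ℝ → ℝ) : Measurable (Mr r f) :=
  (measurable_HLMax _).pow_const _

lemma mul_volume_lt_HLMax_le (f : ℝ → ℝ) (t : ℝ≥0∞) :
    t * volume {x | t < HLMax f x} ≤ 2 * ∫⁻ y, ENNReal.ofReal |f y| := by
  rw [HLMax_eq_maxQuotient, ← setLIntegral_univ, ← withDensity_apply _ MeasurableSet.univ]
  exact mul_measure_lt_maxQuotient_le _ _ t

lemma HLMax_mono {f g : ℝ → ℝ} (hfg : ∀ x, |f x| ≤ |g x|) (x : ℝ) : HLMax f x ≤ HLMax g x := by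
  unfold HLMax
  gcongr ⨆ a, ⨆ b, ⨆ _, ⨆ _, _ * ∫⁻ y in _, ENNReal.ofReal ?_ with a b _ _ y
  exact hfg y

lemma HLMax_le_ofReal {f : ℝ → ℝ} {K : ℝ} (hK : ∀ x, |f x| ≤ K) (x : ℝ) :
    HLMax f x ≤ ENNReal.ofReal K := by
  refine iSup_le fun a => iSup_le fun b => iSup_le fun _ => iSup_le fun hx => ?_
  rw [mul_comm, ← div_eq_mul_inv]
  refine ENNReal.div_le_of_le_mul ?_
  calc ∫⁻ y in Ioo a b, ENNReal.ofReal |f y| ≤ ∫⁻ _ in Ioo a b, ENNReal.ofReal K := by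
        gcongr with y
        exact hK y
    _ = ENNReal.ofReal K * ENNReal.ofReal (b - a) := by rw [setLIntegral_const, Real.volume_Ioo]

lemma ofReal_le_HLMax {f : ℝ → ℝ} {a b x c : ℝ} (hx : x ∈ Ioo a b)
    (hc : ∀ y ∈ Ioo a b, c ≤ |f y|) : ENNReal.ofReal c ≤ HLMax f x := by
  have hab : a < b := hx.1.trans hx.2
  refine le_trans ?_ (average_le_HLMax f hab ⟨hx.1.le, hx.2.le⟩)
  rw [mul_comm, ← div_eq_mul_inv, ENNReal.le_div_iff_mul_le (Or.inl (by simpa)) (Or.inl (by simp))]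
  calc ENNReal.ofReal c * ENNReal.ofReal (b - a) = ∫⁻ _ in Ioo a b, ENNReal.ofReal c := by
        rw [setLIntegral_const, Real.volume_Ioo]
    _ ≤ ∫⁻ y in Ioo a b, ENNReal.ofReal |f y| :=
        setLIntegral_mono' measurableSet_Ioo fun y hy => ENNReal.ofReal_le_ofReal (hc y hy)

lemma ofReal_abs_le_HLMax {f : ℝ → ℝ} {x : ℝ} (hf : ContinuousAt f x) :
    ENNReal.ofReal |f x| ≤ HLMax f x := by
  refine ENNReal.le_of_forall_pos_le_add fun ε hε _ => ?_
  obtain ⟨a, b, hx, hab⟩ := mem_nhds_iff_exists_Ioo_subset.1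
    (hf.abs.eventually_const_le (sub_lt_self |f x| (NNReal.coe_pos.2 hε)))
  calc ENNReal.ofReal |f x| = ENNReal.ofReal ((|f x| - ε) + ε) := by rw [sub_add_cancel]
    _ ≤ ENNReal.ofReal (|f x| - ε) + ENNReal.ofReal ε := ENNReal.ofReal_add_le
    _ ≤ HLMax f x + ε := by
        rw [ENNReal.ofReal_coe_nnreal]
        gcongr
        exact ofReal_le_HLMax hx hab

lemma ae_eq_zero_of_HLMax_eq_zero {f : ℝ → ℝ} (hf : AEMeasurable f) {x : ℝ}
    (hx : HLMax f x = 0) : f =ᵐ[volume] 0 := by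
  have hIoo : ∀ n : ℕ, ∀ᵐ y ∂volume.restrict (Ioo (x - (n + 1)) (x + (n + 1))), f y = 0 := by
    intro n
    have : (0 : ℝ) < n + 1 := by positivity
    have havg := average_le_HLMax f (a := x - (n + 1)) (b := x + (n + 1)) (x := x)
      (by linarith) ⟨by linarith, by linarith⟩
    rw [hx, nonpos_iff_eq_zero, mul_eq_zero, ENNReal.inv_eq_zero] at havg
    have hint := havg.resolve_left ENNReal.ofReal_ne_top
    rw [lintegral_eq_zero_iff' hf.abs.ennreal_ofReal.restrict] at hint
    filter_upwards [hint] with y hy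
    simpa using hy
  have hcover : ⋃ n : ℕ, Ioo (x - (n + 1)) (x + (n + 1)) = univ := by
    refine eq_univ_of_forall fun y => mem_iUnion.2 ?_
    obtain ⟨n, hn⟩ := exists_nat_gt |y - x|
    have := abs_lt.1 hn
    exact ⟨n, by linarith, by linarith⟩
  have := (ae_restrict_iUnion_iff _ _).2 hIoo
  rwa [hcover, Measure.restrict_univ] at this

lemma ofReal_abs_abs_rpow {s : ℝ} (hs : 0 ≤ s) (t : ℝ) :
    ENNReal.ofReal |(|t| ^ s)| = ENNReal.ofReal |t| ^ s := by
  rw [abs_of_nonneg (by positivity), ENNReal.ofReal_rpow_of_nonneg (abs_nonneg _) hs]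

lemma Mr_eq_iSup {r : ℝ} (hr : 0 < r) (f : ℝ → ℝ) (x : ℝ) :
    Mr r f x = ⨆ (a : ℝ) (b : ℝ) (_ : a < b) (_ : x ∈ Icc a b),
      ((ENNReal.ofReal (b - a))⁻¹ * ∫⁻ y in Ioo a b, ENNReal.ofReal |f y| ^ r) ^ (1 / r) := by
  have hiso : ∀ z : ℝ≥0∞, z ^ (1 / r) = ENNReal.orderIsoRpow (1 / r) (by positivity) z :=
    fun z => rfl
  simp only [Mr, HLMax, ofReal_abs_abs_rpow hr.le, hiso, OrderIso.map_iSup]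

lemma rpow_average_le_Mr {r : ℝ} (hr : 0 < r) (f : ℝ → ℝ) {a b x : ℝ} (hab : a < b)
    (hx : x ∈ Icc a b) :
    ((ENNReal.ofReal (b - a))⁻¹ * ∫⁻ y in Ioo a b, ENNReal.ofReal |f y| ^ r) ^ (1 / r) ≤
      Mr r f x := by
  rw [Mr_eq_iSup hr]
  exact le_iSup_of_le a (le_iSup_of_le b (le_iSup_of_le hab (le_iSup_of_le hx le_rfl)))

lemma Mr_mono {r : ℝ} (hr : 0 ≤ r) {f g : ℝ → ℝ} (hfg : ∀ x, |f x| ≤ |g x|) (x : ℝ) :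
    Mr r f x ≤ Mr r g x := by
  refine ENNReal.rpow_le_rpow (HLMax_mono (fun y => ?_) x) (by positivity)
  exact abs_le_abs_of_nonneg (by positivity) (Real.rpow_le_rpow (abs_nonneg _) (hfg y) hr)

lemma Mr_le_ofReal {r K : ℝ} (hr : 0 < r) {f : ℝ → ℝ} (hK : ∀ x, |f x| ≤ K) (x : ℝ) :
    Mr r f x ≤ ENNReal.ofReal K := by
  have hK_nonneg : 0 ≤ K := (abs_nonneg _).trans (hK x)
  calc Mr r f x ≤ ENNReal.ofReal (K ^ r) ^ (1 / r) := by
        refine ENNReal.rpow_le_rpow (HLMax_le_ofReal (fun y => ?_) x) (by positivity)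
        rw [abs_of_nonneg (by positivity)]
        exact Real.rpow_le_rpow (abs_nonneg _) (hK y) hr.le
    _ = ENNReal.ofReal K := by
        rw [ENNReal.ofReal_rpow_of_nonneg (by positivity) (by positivity),
          ← Real.rpow_mul hK_nonneg, mul_one_div_cancel hr.ne', Real.rpow_one]

lemma Mr_add_le {r : ℝ} (hr : 1 ≤ r) {f g : ℝ → ℝ} (hf : AEMeasurable f) (hg : AEMeasurable g)
    (x : ℝ) : Mr r (f + g) x ≤ Mr r f x + Mr r g x := by
  have hr0 : 0 < r := by linarith
  have hr_inv : 0 ≤ 1 / r := by positivity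
  rw [Mr_eq_iSup hr0 (f + g)]
  refine iSup_le fun a => iSup_le fun b => iSup_le fun hab => iSup_le fun hx => ?_
  calc ((ENNReal.ofReal (b - a))⁻¹ * ∫⁻ y in Ioo a b, ENNReal.ofReal |(f + g) y| ^ r) ^ (1 / r)
      ≤ ((ENNReal.ofReal (b - a))⁻¹ *
          ∫⁻ y in Ioo a b, (ENNReal.ofReal |f y| + ENNReal.ofReal |g y|) ^ r) ^ (1 / r) := by
        gcongr with y
        rw [← ENNReal.ofReal_add (abs_nonneg _) (abs_nonneg _)]
        exact ENNReal.ofReal_le_ofReal (abs_add_le _ _)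
    _ ≤ (ENNReal.ofReal (b - a))⁻¹ ^ (1 / r) *
          ((∫⁻ y in Ioo a b, ENNReal.ofReal |f y| ^ r) ^ (1 / r) +
            (∫⁻ y in Ioo a b, ENNReal.ofReal |g y| ^ r) ^ (1 / r)) := by
        rw [ENNReal.mul_rpow_of_nonneg _ _ hr_inv]
        gcongr
        exact ENNReal.lintegral_Lp_add_le hf.abs.ennreal_ofReal.restrict
          hg.abs.ennreal_ofReal.restrict hr
    _ ≤ Mr r f x + Mr r g x := by
        rw [mul_add, ← ENNReal.mul_rpow_of_nonneg _ _ hr_inv,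
          ← ENNReal.mul_rpow_of_nonneg _ _ hr_inv]
        exact add_le_add (rpow_average_le_Mr hr0 f hab hx) (rpow_average_le_Mr hr0 g hab hx)

lemma Mr_le_Mr_of_exponent_le {r s : ℝ} (hr : 0 < r) (hrs : r ≤ s) {f : ℝ → ℝ}
    (hf : AEMeasurable f) (x : ℝ) : Mr r f x ≤ Mr s f x := by
  rw [Mr_eq_iSup hr, Mr_eq_iSup (hr.trans_le hrs)]
  gcongr with a b hab _
  set ν : Measure ℝ := (ENNReal.ofReal (b - a))⁻¹ • volume.restrict (Ioo a b)
  have : IsProbabilityMeasure ν := ⟨by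
    rw [Measure.smul_apply, Measure.restrict_apply_univ, Real.volume_Ioo, smul_eq_mul]
    exact ENNReal.inv_mul_cancel (by simpa) ENNReal.ofReal_ne_top⟩
  have hν : ∀ p : ℝ, (ENNReal.ofReal (b - a))⁻¹ * ∫⁻ y in Ioo a b, ENNReal.ofReal |f y| ^ p =
      ∫⁻ y, ‖f y‖ₑ ^ p ∂ν := fun p => by
    simp only [ν, lintegral_smul_measure, smul_eq_mul, Real.enorm_eq_ofReal_abs]
  rw [hν, hν]
  exact eLpNorm'_le_eLpNorm'_of_exponent_le hr hrs ν
    (hf.restrict.smul_measure _).aestronglyMeasurable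

end HardyLittlewood

section HilbertTransform

/-- A Lipschitz function with compact support. On this class the principal value defining `Hil`
converges absolutely, after pairing the points `x - t` and `x + t`. -/
structure IsTestFunction (f : ℝ → ℝ) : Prop where
  lipschitz : ∃ L : NNReal, LipschitzWith L f
  hasCompactSupport : HasCompactSupport f

namespace IsTestFunction

variable {f g : ℝ → ℝ}

lemma continuous (hf : IsTestFunction f) : Continuous f :=
  let ⟨_, hL⟩ := hf.lipschitz
  hL.continuous

lemma integrable (hf : IsTestFunction f) : Integrable f :=
  hf.continuous.integrable_of_hasCompactSupport hf.hasCompactSupport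

lemma exists_abs_le (hf : IsTestFunction f) : ∃ K, 0 < K ∧ ∀ x, |f x| ≤ K := by
  obtain ⟨K, hK⟩ := hf.hasCompactSupport.exists_bound_of_continuous hf.continuous
  exact ⟨max K 1, by positivity, fun x => (hK x).trans (le_max_left K 1)⟩

lemma exists_support_bound (hf : IsTestFunction f) :
    ∃ R, 0 < R ∧ ∀ x, R < |x| → f x = 0 := by
  obtain ⟨R, hR⟩ := hf.hasCompactSupport.isCompact.isBounded.exists_norm_le
  refine ⟨max R 1, by positivity, fun x hx => image_eq_zero_of_notMem_tsupport fun h => ?_⟩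
  exact absurd (hR x h) (not_le.2 ((le_max_left R 1).trans_lt hx))

lemma integrable_mul_comp_add (hf : IsTestFunction f) (hg : IsTestFunction g) (s : ℝ) :
    Integrable fun x => g x * f (x + s) := by
  obtain ⟨K, -, hK⟩ := hf.exists_abs_le
  have := hf.continuous
  exact hg.integrable.mul_bdd (c := K) (by fun_prop) (Eventually.of_forall fun x => hK _)

end IsTestFunction

/-- The symmetric difference quotient `(f(x-t) - f(x+t)) / t`, whose integral over `t > 0` is the
Hilbert transform of a regular `f` at `x`. -/
def symmDiffQuot (f : ℝ → ℝ) (x t : ℝ) : ℝ := (f (x - t) - f (x + t)) / t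

lemma measurable_uncurry_symmDiffQuot {f : ℝ → ℝ} (hf : Measurable f) :
    Measurable (Function.uncurry (symmDiffQuot f)) := by
  unfold Function.uncurry symmDiffQuot
  fun_prop

lemma abs_symmDiffQuot_le {f : ℝ → ℝ} {L : NNReal} (hL : LipschitzWith L f) {R : ℝ}
    (hR : ∀ x, R < |x| → f x = 0) (x t : ℝ) :
    |symmDiffQuot f x t| ≤ (Icc (-R) R).indicator (fun _ => 2 * (L : ℝ)) (x - t) +
      (Icc (-R) R).indicator (fun _ => 2 * (L : ℝ)) (x + t) := by
  have indicator_nonneg : ∀ y, 0 ≤ (Icc (-R) R).indicator (fun _ => 2 * (L : ℝ)) y :=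
    fun y => Set.indicator_nonneg (fun _ _ => by positivity) y
  have lipschitz_le : |symmDiffQuot f x t| ≤ 2 * L := by
    rw [symmDiffQuot, abs_div]
    refine div_le_of_le_mul₀ (abs_nonneg t) (by positivity) ?_
    calc |f (x - t) - f (x + t)| ≤ L * |x - t - (x + t)| := hL.dist_le_mul _ _
      _ = 2 * L * |t| := by
          rw [show x - t - (x + t) = -(2 * t) by ring, abs_neg, abs_mul, abs_two]
          ring
  by_cases h₁ : x - t ∈ Icc (-R) R
  · rw [indicator_of_mem h₁]
    linarith [indicator_nonneg (x + t)]
  by_cases h₂ : x + t ∈ Icc (-R) R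
  · rw [indicator_of_mem h₂]
    linarith [indicator_nonneg (x - t)]
  have vanish : ∀ y, y ∉ Icc (-R) R → f y = 0 := fun y hy =>
    hR y (not_le.1 fun h => hy (abs_le.1 h))
  rw [symmDiffQuot, vanish _ h₁, vanish _ h₂, sub_zero, zero_div, abs_zero]
  linarith [indicator_nonneg (x - t), indicator_nonneg (x + t)]

lemma IsTestFunction.exists_integral_abs_symmDiffQuot_le {f : ℝ → ℝ} (hf : IsTestFunction f) :
    ∃ K, 0 < K ∧ ∀ x, IntegrableOn (symmDiffQuot f x) (Ioi 0) ∧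
      ∫ t in Ioi 0, |symmDiffQuot f x t| ≤ K := by
  obtain ⟨L, hL⟩ := hf.lipschitz
  obtain ⟨R, -, hR⟩ := hf.exists_support_bound
  set φ : ℝ → ℝ := (Icc (-R) R).indicator fun _ => 2 * (L : ℝ)
  have hφ : Integrable φ :=
    (integrable_indicator_iff measurableSet_Icc).2 (integrableOn_const (by simp))
  have φ_nonneg : ∀ y, 0 ≤ φ y := fun y => Set.indicator_nonneg (fun _ _ => by positivity) y
  have integral_φ_nonneg : 0 ≤ ∫ y, φ y := integral_nonneg φ_nonneg
  refine ⟨2 * (∫ y, φ y) + 1, by linarith, fun x => ?_⟩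
  have hsub : Integrable fun t => φ (x - t) := hφ.comp_sub_left x
  have hadd : Integrable fun t => φ (x + t) := hφ.comp_add_left x
  have hmajorant : Integrable fun t => φ (x - t) + φ (x + t) := hsub.add hadd
  have hquot : Integrable (symmDiffQuot f x) := by
    refine hmajorant.mono' ?_ (Eventually.of_forall fun t => abs_symmDiffQuot_le hL hR x t)
    exact ((measurable_uncurry_symmDiffQuot hf.continuous.measurable).comp
      measurable_prodMk_left).aestronglyMeasurable
  refine ⟨hquot.integrableOn, ?_⟩
  calc ∫ t in Ioi 0, |symmDiffQuot f x t|
      ≤ ∫ t, |symmDiffQuot f x t| :=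
        setIntegral_le_integral hquot.abs (Eventually.of_forall fun t => abs_nonneg _)
    _ ≤ ∫ t, (φ (x - t) + φ (x + t)) :=
        integral_mono hquot.abs hmajorant fun t => abs_symmDiffQuot_le hL hR x t
    _ = 2 * ∫ y, φ y := by
        rw [integral_add hsub hadd, integral_sub_left_eq_self, integral_add_left_eq_self, two_mul]
    _ ≤ 2 * (∫ y, φ y) + 1 := le_add_of_nonneg_right zero_le_one

lemma integral_eq_integral_Ioi_add_comp_neg {φ : ℝ → ℝ} (hφ : Integrable φ) :
    ∫ t, φ t = ∫ t in Ioi 0, (φ t + φ (-t)) := by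
  rw [integral_add hφ.integrableOn hφ.comp_neg.integrableOn, integral_comp_neg_Ioi, neg_zero,
    add_comm, intervalIntegral.integral_Iic_add_Ioi hφ.integrableOn hφ.integrableOn]

/-- The truncated Hilbert transform, whose limit at `ε = 0⁺` is `Hil f x`. -/
def truncatedHil (f : ℝ → ℝ) (x ε : ℝ) : ℝ := ∫ y in {y : ℝ | ε < |x - y|}, f y / (x - y)

lemma measurableSet_lt_abs_sub (x ε : ℝ) : MeasurableSet {y : ℝ | ε < |x - y|} :=
  measurableSet_lt (by fun_prop) (by fun_prop)

lemma integrableOn_div_sub {f : ℝ → ℝ} (hf : Integrable f) (x : ℝ) {ε : ℝ} (hε : 0 < ε) :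
    IntegrableOn (fun y => f y / (x - y)) {y : ℝ | ε < |x - y|} := by
  have hinv : Measurable fun y : ℝ => (x - y)⁻¹ := by fun_prop
  simp only [div_eq_mul_inv]
  refine hf.integrableOn.mul_bdd (c := ε⁻¹) hinv.aestronglyMeasurable.restrict ?_
  filter_upwards [ae_restrict_mem (measurableSet_lt_abs_sub x ε)] with y hy
  rw [norm_inv, Real.norm_eq_abs]
  exact inv_anti₀ hε hy.le

lemma truncatedHil_eq_integral {f : ℝ → ℝ} (hf : Integrable f) (x : ℝ) {ε : ℝ} (hε : 0 < ε) :
    truncatedHil f x ε = ∫ t in Ioi 0, (Ioi ε).indicator (symmDiffQuot f x) t := by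
  have hset := measurableSet_lt_abs_sub x ε
  set φ : ℝ → ℝ := {y : ℝ | ε < |x - y|}.indicator fun y => f y / (x - y)
  have hφ : Integrable φ := (integrable_indicator_iff hset).2 (integrableOn_div_sub hf x hε)
  rw [truncatedHil, ← integral_indicator hset, ← integral_sub_left_eq_self φ volume x,
    integral_eq_integral_Ioi_add_comp_neg (hφ.comp_sub_left x)]
  refine setIntegral_congr_fun measurableSet_Ioi fun t (ht : 0 < t) => ?_
  by_cases hεt : ε < t
  · simp only [φ, indicator_apply, mem_ofPred_eq, mem_Ioi, sub_sub_cancel, sub_neg_eq_add,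
      sub_add_cancel_left, abs_neg, abs_of_pos ht, hεt, if_true, symmDiffQuot]
    ring
  · simp only [φ, indicator_apply, mem_ofPred_eq, mem_Ioi, sub_sub_cancel, abs_neg, abs_of_pos ht,
      hεt, if_false, add_zero]

namespace IsTestFunction

variable {f g : ℝ → ℝ}

lemma tendsto_truncatedHil (hf : IsTestFunction f) (x : ℝ) :
    Tendsto (truncatedHil f x) (𝓝[>] 0) (𝓝 (∫ t in Ioi 0, symmDiffQuot f x t)) := by
  obtain ⟨K, -, hK⟩ := hf.exists_integral_abs_symmDiffQuot_le
  have hlim : Tendsto (fun ε : ℝ => ∫ t in Ioi 0, (Ioi ε).indicator (symmDiffQuot f x) t) (𝓝[>] 0)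
      (𝓝 (∫ t in Ioi 0, symmDiffQuot f x t)) := by
    refine tendsto_integral_filter_of_dominated_convergence (fun t => |symmDiffQuot f x t|)
      (Eventually.of_forall fun ε => (hK x).1.aestronglyMeasurable.indicator measurableSet_Ioi)
      (Eventually.of_forall fun ε => Eventually.of_forall fun t => ?_) (hK x).1.abs ?_
    · exact norm_indicator_le_norm_self _ t
    · filter_upwards [ae_restrict_mem measurableSet_Ioi] with t ht
      refine tendsto_const_nhds.congr' ?_
      filter_upwards [nhdsWithin_le_nhds (Iio_mem_nhds ht)] with ε hε
      rw [indicator_of_mem (mem_Ioi.2 hε)]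
  refine hlim.congr' ?_
  filter_upwards [self_mem_nhdsWithin] with ε hε
  rw [truncatedHil_eq_integral hf.integrable x hε]

lemma Hil_eq_integral (hf : IsTestFunction f) (x : ℝ) :
    Hil f x = ∫ t in Ioi 0, symmDiffQuot f x t :=
  (hf.tendsto_truncatedHil x).limUnder_eq

lemma exists_abs_Hil_le (hf : IsTestFunction f) : ∃ K, 0 < K ∧ ∀ x, |Hil f x| ≤ K := by
  obtain ⟨K, hK_pos, hK⟩ := hf.exists_integral_abs_symmDiffQuot_le
  refine ⟨K, hK_pos, fun x => ?_⟩
  rw [hf.Hil_eq_integral]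
  exact abs_integral_le_integral_abs.trans (hK x).2

lemma measurable_Hil (hf : IsTestFunction f) : Measurable (Hil f) := by
  rw [funext hf.Hil_eq_integral]
  exact (StronglyMeasurable.integral_prod_right
    (measurable_uncurry_symmDiffQuot hf.continuous.measurable).stronglyMeasurable).measurable

lemma integrable_uncurry_mul_symmDiffQuot (hf : IsTestFunction f) (hg : IsTestFunction g) :
    Integrable (Function.uncurry fun x t : ℝ => g x * symmDiffQuot f x t)
      (volume.prod (volume.restrict (Ioi (0 : ℝ)))) := by
  obtain ⟨K, -, hK⟩ := hf.exists_integral_abs_symmDiffQuot_le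
  have hmeas : Measurable (Function.uncurry fun x t : ℝ => g x * symmDiffQuot f x t) :=
    (hg.continuous.measurable.comp measurable_fst).mul
      (measurable_uncurry_symmDiffQuot hf.continuous.measurable)
  refine (integrable_prod_iff hmeas.aestronglyMeasurable).2
    ⟨Eventually.of_forall fun x => (hK x).1.const_mul (g x), ?_⟩
  refine (hg.integrable.abs.mul_const K).mono'
    hmeas.aestronglyMeasurable.norm.integral_prod_right' (Eventually.of_forall fun x => ?_)
  have integral_nonneg : 0 ≤ ∫ t in Ioi 0, |symmDiffQuot f x t| := by positivity
  simp only [Function.uncurry, norm_mul, Real.norm_eq_abs, integral_const_mul, abs_abs,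
    abs_of_nonneg integral_nonneg]
  exact mul_le_mul_of_nonneg_left (hK x).2 (abs_nonneg _)

lemma integral_mul_Hil (hf : IsTestFunction f) (hg : IsTestFunction g) :
    ∫ x, g x * Hil f x = ∫ t in Ioi 0, ∫ x, g x * symmDiffQuot f x t := by
  rw [← integral_integral_swap (hf.integrable_uncurry_mul_symmDiffQuot hg)]
  simp only [hf.Hil_eq_integral, integral_const_mul]

lemma integral_mul_symmDiffQuot (hf : IsTestFunction f) (hg : IsTestFunction g) (t : ℝ) :
    ∫ x, g x * symmDiffQuot f x t =
      ((∫ x, g x * f (x + -t)) - ∫ x, g x * f (x + t)) * t⁻¹ := by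
  rw [← integral_sub (hf.integrable_mul_comp_add hg _) (hf.integrable_mul_comp_add hg _),
    ← integral_mul_const]
  refine integral_congr_ae (Eventually.of_forall fun x => ?_)
  simp only [symmDiffQuot, ← sub_eq_add_neg, div_eq_mul_inv]
  ring

theorem integral_mul_Hil_eq_neg (hf : IsTestFunction f) (hg : IsTestFunction g) :
    ∫ x, g x * Hil f x = -∫ x, f x * Hil g x := by
  have shift : ∀ s : ℝ, ∫ x, g x * f (x + s) = ∫ x, f x * g (x + -s) := fun s => by
    rw [← integral_add_right_eq_self _ (-s)]
    simp only [neg_add_cancel_right, mul_comm]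
  rw [hf.integral_mul_Hil hg, hg.integral_mul_Hil hf, ← integral_neg]
  refine integral_congr_ae (Eventually.of_forall fun t => ?_)
  simp only [hf.integral_mul_symmDiffQuot hg, hg.integral_mul_symmDiffQuot hf, shift, neg_neg]
  ring

end IsTestFunction

end HilbertTransform

section DualWeight

variable {r : ℝ} {W : ℝ → ℝ}

/-- The measure `W^s dx`. -/
def powMeasure (s : ℝ) (W : ℝ → ℝ) : Measure ℝ :=
  volume.withDensity fun x => ENNReal.ofReal (W x) ^ s

lemma HLMax_rpow_eq_maxQuotient {s : ℝ} (hs : 0 ≤ s) (hW_nonneg : ∀ x, 0 ≤ W x) :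
    HLMax (fun y => |W y| ^ s) = maxQuotient (powMeasure s W) volume := by
  simp only [HLMax_eq_maxQuotient, ofReal_abs_abs_rpow hs, powMeasure]
  simp only [abs_of_nonneg (hW_nonneg _)]

lemma isFiniteMeasure_powMeasure {s : ℝ} (hs : 0 ≤ s) (hW_nonneg : ∀ x, 0 ≤ W x)
    (hW_int : Integrable fun x => W x ^ s) : IsFiniteMeasure (powMeasure s W) := by
  simp only [powMeasure, ENNReal.ofReal_rpow_of_nonneg (hW_nonneg _) hs]
  exact isFiniteMeasure_withDensity_ofReal hW_int.2

lemma rpow_mul_indicator_rpow (hr : 0 < r) (E : Set ℝ) (y : ℝ) :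
    ENNReal.ofReal (W y) ^ (2 * r - 1) *
        E.indicator (fun x => ENNReal.ofReal (W x) ^ (1 - r)) y =
      ENNReal.ofReal (E.indicator W y) ^ r := by
  by_cases hy : y ∈ E
  · rw [indicator_of_mem hy, indicator_of_mem hy,
      ← ENNReal.rpow_add_of_add_pos ENNReal.ofReal_ne_top _ _ (by linarith)]
    ring_nf
  · simp [hy, hr]

lemma rpow_mul_indicator_rpow_sq (E : Set ℝ) (y : ℝ) :
    ENNReal.ofReal (W y) ^ (2 * r - 1) *
        E.indicator (fun x => ENNReal.ofReal (W x) ^ (1 - r)) y ^ 2 =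
      E.indicator (fun x => ENNReal.ofReal (W x)) y := by
  by_cases hy : y ∈ E
  · rw [indicator_of_mem hy, indicator_of_mem hy, ← ENNReal.rpow_two, ← ENNReal.rpow_mul,
      ← ENNReal.rpow_add_of_add_pos ENNReal.ofReal_ne_top _ _ (by linarith)]
    ring_nf
    rw [ENNReal.rpow_one]
  · simp [hy]

lemma powMeasure_withDensity_indicator (hr : 0 < r) (hW : Measurable W)
    {E : Set ℝ} (hE : MeasurableSet E) :
    (powMeasure (2 * r - 1) W).withDensity
        (E.indicator fun x => ENNReal.ofReal (W x) ^ (1 - r)) =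
      powMeasure r (E.indicator W) := by
  rw [powMeasure, powMeasure, ← withDensity_mul _ (hW.ennreal_ofReal.pow_const _)
    ((hW.ennreal_ofReal.pow_const _).indicator hE)]
  congr 1
  exact funext (rpow_mul_indicator_rpow hr E)

lemma Mr_indicator_rpow_le (hr : 1 / 2 ≤ r) (hW : Measurable W) (hW_nonneg : ∀ x, 0 ≤ W x)
    (hW_int : Integrable fun x => W x ^ (2 * r - 1)) {E : Set ℝ} (hE : MeasurableSet E) (x : ℝ) :
    Mr r (E.indicator W) x ^ (2 * r) ≤
      (HLMax (fun y => |W y| ^ (2 * r - 1)) x *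
        maxQuotient ((powMeasure (2 * r - 1) W).withDensity
          (E.indicator fun x => ENNReal.ofReal (W x) ^ (1 - r)))
          (powMeasure (2 * r - 1) W) x) ^ 2 := by
  have hr_pos : 0 < r := by linarith
  have hβ : 0 ≤ 2 * r - 1 := by linarith
  have := isFiniteMeasure_powMeasure hβ hW_nonneg hW_int
  have hexp : 1 / r * (2 * r) = 2 := by field_simp
  rw [Mr, ← ENNReal.rpow_mul, hexp, ENNReal.rpow_two, HLMax_rpow_eq_maxQuotient hβ hW_nonneg,
    HLMax_rpow_eq_maxQuotient hr_pos.le (indicator_nonneg fun x _ => hW_nonneg x),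
    ← powMeasure_withDensity_indicator hr_pos hW hE]
  gcongr
  exact maxQuotient_le_mul_maxQuotient _ _ _ (withDensity_absolutelyContinuous _ _) x

/-- The density `u = W^{2r-1} / M(W^{2r-1})²`. It is the weight for which `M_r(1_E W)` is bounded
in `L^{2r}(u)` by `W(E)^{1/(2r)}` with a constant that stays bounded in `r`. -/
def dualWeight (r : ℝ) (W : ℝ → ℝ) (x : ℝ) : ℝ≥0∞ :=
  ENNReal.ofReal (W x) ^ (2 * r - 1) / HLMax (fun y => |W y| ^ (2 * r - 1)) x ^ 2

lemma measurable_dualWeight (r : ℝ) (hW : Measurable W) : Measurable (dualWeight r W) :=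
  (hW.ennreal_ofReal.pow_const _).div ((measurable_HLMax _).pow_const _)

theorem lintegral_Mr_indicator_rpow_mul_dualWeight_le (hr : 1 / 2 ≤ r) (hW : Measurable W)
    (hW_nonneg : ∀ x, 0 ≤ W x) (hW_int : Integrable fun x => W x ^ (2 * r - 1))
    {E : Set ℝ} (hE : MeasurableSet E) :
    ∫⁻ x, Mr r (E.indicator W) x ^ (2 * r) * dualWeight r W x ≤
      16 * ∫⁻ x in E, ENNReal.ofReal (W x) := by
  set v : ℝ → ℝ≥0∞ := fun x => ENNReal.ofReal (W x) ^ (2 * r - 1)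
  have hv : Measurable v := hW.ennreal_ofReal.pow_const _
  set h : ℝ → ℝ≥0∞ := E.indicator fun x => ENNReal.ofReal (W x) ^ (1 - r)
  have hh : Measurable h := (hW.ennreal_ofReal.pow_const _).indicator hE
  set ν := powMeasure (2 * r - 1) W
  have : IsFiniteMeasure ν := isFiniteMeasure_powMeasure (by linarith) hW_nonneg hW_int
  have lintegral_ν : ∀ φ : ℝ → ℝ≥0∞, Measurable φ → ∫⁻ x, φ x ∂ν = ∫⁻ x, v x * φ x :=
    fun φ hφ => lintegral_withDensity_eq_lintegral_mul _ hv hφ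
  set N := maxQuotient (ν.withDensity h) ν
  have hN : Measurable N := measurable_maxQuotient _ _
  set M := HLMax fun y => |W y| ^ (2 * r - 1)
  have pointwise_le : ∀ x, Mr r (E.indicator W) x ^ (2 * r) * (v x / M x ^ 2) ≤ v x * N x ^ 2 :=
    fun x => calc
      Mr r (E.indicator W) x ^ (2 * r) * (v x / M x ^ 2)
        ≤ (M x * N x) ^ 2 * (v x / M x ^ 2) :=
          mul_le_mul_left (Mr_indicator_rpow_le hr hW hW_nonneg hW_int hE x) _
      _ = M x ^ 2 * (v x / M x ^ 2) * N x ^ 2 := by ring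
      _ ≤ v x * N x ^ 2 := mul_le_mul_left ENNReal.mul_div_le _
  calc ∫⁻ x, Mr r (E.indicator W) x ^ (2 * r) * dualWeight r W x
      ≤ ∫⁻ x, v x * N x ^ 2 := lintegral_mono pointwise_le
    _ = ∫⁻ x, N x ^ 2 ∂ν := (lintegral_ν _ (hN.pow_const 2)).symm
    _ ≤ 16 * ∫⁻ x, h x ^ 2 ∂ν := lintegral_maxQuotient_sq_le ν hh
    _ = 16 * ∫⁻ x, v x * h x ^ 2 := by
        rw [lintegral_ν _ (hh.pow_const 2)]
    _ = 16 * ∫⁻ x in E, ENNReal.ofReal (W x) := by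
        simp only [v, h, rpow_mul_indicator_rpow_sq, lintegral_indicator hE]

end DualWeight

section Kolmogorov

variable {p q : ℝ}

lemma le_div_rpow_of_mul_le_mul_rpow (hpq : p.HolderConjugate q) {l m B : ℝ} (hl : 0 < l)
    (hm : 0 ≤ m) (hB : 0 ≤ B) (h : l * m ≤ B * m ^ (1 / q)) : m ≤ (B / l) ^ p := by
  rcases hm.eq_or_lt with rfl | hm_pos
  · positivity
  have hroot : m ^ (1 / p) ≤ B / l := by
    rw [le_div_iff₀ hl]
    refine le_of_mul_le_mul_right ?_ (Real.rpow_pos_of_pos hm_pos (1 / q))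
    calc m ^ (1 / p) * l * m ^ (1 / q) = l * (m ^ (1 / p) * m ^ (1 / q)) := by ring
      _ = l * m := by
          rw [← Real.rpow_add hm_pos, one_div, one_div, hpq.inv_add_inv_eq_one, Real.rpow_one]
      _ ≤ B * m ^ (1 / q) := h
  calc m = (m ^ (1 / p)) ^ p := by
        rw [← Real.rpow_mul hm, one_div_mul_cancel hpq.ne_zero, Real.rpow_one]
    _ ≤ (B / l) ^ p := Real.rpow_le_rpow (by positivity) hroot hpq.nonneg

lemma rpow_neg_one_div_mul_self (hpq : p.HolderConjugate q) {m : ℝ} (hm : 0 < m) :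
    m ^ (-(1 / p)) * m = m ^ (1 / q) := by
  rw [one_div q, ← hpq.one_sub_inv, sub_eq_neg_add, Real.rpow_add hm, Real.rpow_one, one_div]

lemma setLIntegral_Ioi_ofReal_div_rpow (hpq : p.HolderConjugate q) {B m : ℝ} (hB : 0 < B)
    (hm : 0 < m) :
    ∫⁻ t in Ioi (B * m ^ (-(1 / p))), ENNReal.ofReal ((B / t) ^ p) =
      ENNReal.ofReal ((q - 1) * (B * m ^ (1 / q))) := by
  set T := B * m ^ (-(1 / p)) with hT_def
  have hT : 0 < T := by positivity
  have hp := hpq.lt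
  have hexp : -(1 / p) * (-p + 1) = 1 / q := by
    have hp_ne := hpq.ne_zero
    rw [one_div q, ← hpq.one_sub_inv]
    field_simp
    ring
  have hpq1 := hpq.sub_one_mul_conj
  have heq : EqOn (fun t => ENNReal.ofReal ((B / t) ^ p))
      (fun t => ENNReal.ofReal (B ^ p * t ^ (-p))) (Ioi T) := fun t ht => by
    beta_reduce
    rw [Real.div_rpow hB.le (hT.trans ht).le, Real.rpow_neg (hT.trans ht).le, div_eq_mul_inv]
  rw [setLIntegral_congr_fun measurableSet_Ioi heq, ← ofReal_integral_eq_lintegral_ofReal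
    ((integrableOn_Ioi_rpow_of_lt (by linarith) hT).const_mul _)
    ((ae_restrict_iff' measurableSet_Ioi).2 (.of_forall fun t ht => by
      have : 0 < t := hT.trans ht
      positivity)),
    integral_const_mul, integral_Ioi_rpow_of_lt (by linarith) hT, hT_def,
    Real.mul_rpow hB.le (by positivity), ← Real.rpow_mul hm.le, hexp, Real.rpow_add hB,
    Real.rpow_neg hB.le, Real.rpow_one]
  congr 1
  have : B ^ p ≠ 0 := by positivity
  have : -p + 1 ≠ 0 := by linarith
  field_simp
  linear_combination hpq1

theorem lintegral_ofReal_le_of_mul_measure_lt_le {X : Type*} [MeasurableSpace X] {μ : Measure X}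
    [IsFiniteMeasure μ] (hpq : p.HolderConjugate q) {g : X → ℝ} (hg : AEMeasurable g μ)
    (hg_nonneg : ∀ x, 0 ≤ g x) {B : ℝ} (hB : 0 ≤ B)
    (h : ∀ t, 0 < t → t * μ.real {x | t < g x} ≤ B * μ.real {x | t < g x} ^ (1 / q)) :
    ∫⁻ x, ENNReal.ofReal (g x) ∂μ ≤ ENNReal.ofReal (q * (B * μ.real univ ^ (1 / q))) := by
  set m := μ.real univ
  have weak : ∀ t, 0 < t → μ {x | t < g x} ≤ ENNReal.ofReal ((B / t) ^ p) := fun t ht => by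
    rw [← ofReal_measureReal]
    exact ENNReal.ofReal_le_ofReal
      (le_div_rpow_of_mul_le_mul_rpow hpq ht measureReal_nonneg hB (h t ht))
  rw [lintegral_eq_lintegral_meas_lt μ (.of_forall hg_nonneg) hg]
  rcases hB.eq_or_lt with rfl | hB
  · refine (setLIntegral_mono' measurableSet_Ioi weak).trans ?_
    simp [Real.zero_rpow hpq.ne_zero]
  rcases (measureReal_nonneg : 0 ≤ m).eq_or_lt with hm | hm
  · have hμ : μ = 0 := by
      simpa [m, measureReal_eq_zero_iff] using hm.symm
    simp [hμ]
  set T := B * m ^ (-(1 / p))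
  have hT : 0 < T := by positivity
  have below : ∫⁻ t in Ioc 0 T, μ {x | t < g x} ≤ ENNReal.ofReal (B * m ^ (1 / q)) := calc
    ∫⁻ t in Ioc 0 T, μ {x | t < g x} ≤ ∫⁻ _ in Ioc 0 T, μ univ := by
        gcongr
        exact subset_univ _
    _ = ENNReal.ofReal (B * m ^ (1 / q)) := by
        rw [setLIntegral_const, Real.volume_Ioc, sub_zero, ← ofReal_measureReal,
          ← ENNReal.ofReal_mul hm.le, mul_comm, mul_assoc, rpow_neg_one_div_mul_self hpq hm]
  have above : ∫⁻ t in Ioi T, μ {x | t < g x} ≤ ENNReal.ofReal ((q - 1) * (B * m ^ (1 / q))) :=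
    (setLIntegral_mono' measurableSet_Ioi fun t ht => weak t (hT.trans ht)).trans_eq
      (setLIntegral_Ioi_ofReal_div_rpow hpq hB hm)
  have hq : 0 < q - 1 := hpq.symm.sub_one_pos
  rw [← Ioc_union_Ioi_eq_Ioi hT.le]
  calc ∫⁻ t in Ioc 0 T ∪ Ioi T, μ {x | t < g x}
      ≤ (∫⁻ t in Ioc 0 T, μ {x | t < g x}) + ∫⁻ t in Ioi T, μ {x | t < g x} :=
        lintegral_union_le _ _ _
    _ ≤ ENNReal.ofReal (B * m ^ (1 / q)) + ENNReal.ofReal ((q - 1) * (B * m ^ (1 / q))) :=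
        add_le_add below above
    _ = ENNReal.ofReal (q * (B * m ^ (1 / q))) := by
        rw [← ENNReal.ofReal_add (by positivity) (by positivity)]
        congr 1
        ring

end Kolmogorov

section DualEnergy

/-- The dual energy `∫ |f|^p u^{1-p}`, which pairs with `∫ |g|^q u` in Hölder's inequality. -/
def dualEnergy (p : ℝ) (u : ℝ → ℝ≥0∞) (f : ℝ → ℝ) : ℝ≥0∞ :=
  ∫⁻ x, ENNReal.ofReal |f x| ^ p * u x ^ (1 - p)

variable {p q : ℝ} {u : ℝ → ℝ≥0∞}

lemma dualEnergy_mono (hp : 0 ≤ p) {f g : ℝ → ℝ} (hfg : ∀ x, |f x| ≤ |g x|) :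
    dualEnergy p u f ≤ dualEnergy p u g := by
  unfold dualEnergy
  gcongr ∫⁻ x, ENNReal.ofReal ?_ ^ p * _ with x
  exact hfg x

lemma lintegral_mul_le_dualEnergy (hpq : p.HolderConjugate q) (hu : Measurable u) {f : ℝ → ℝ}
    (hf : Measurable f) (hu_zero : ∀ x, f x ≠ 0 → u x ≠ 0) (hu_top : ∀ x, f x ≠ 0 → u x ≠ ⊤)
    {G : ℝ → ℝ≥0∞} (hG : Measurable G) :
    ∫⁻ x, ENNReal.ofReal |f x| * G x ≤
      dualEnergy p u f ^ (1 / p) * (∫⁻ x, G x ^ q * u x) ^ (1 / q) := by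
  have hp := hpq.nonneg
  have hq := hpq.symm.nonneg
  have hexp : -(1 / q) * p = 1 - p := by
    rw [one_div, ← hpq.one_sub_inv, neg_mul, sub_mul, inv_mul_cancel₀ hpq.ne_zero]
    ring
  have split : ∀ x, ENNReal.ofReal |f x| * G x =
      ENNReal.ofReal |f x| * u x ^ (-(1 / q)) * (G x * u x ^ (1 / q)) := fun x => by
    by_cases hx : f x = 0
    · simp [hx]
    calc ENNReal.ofReal |f x| * G x
        = ENNReal.ofReal |f x| * G x * (u x ^ (-(1 / q)) * u x ^ (1 / q)) := by
          rw [← ENNReal.rpow_add _ _ (hu_zero x hx) (hu_top x hx), neg_add_cancel,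
            ENNReal.rpow_zero, mul_one]
      _ = ENNReal.ofReal |f x| * u x ^ (-(1 / q)) * (G x * u x ^ (1 / q)) := by ring
  simp only [split]
  refine (ENNReal.lintegral_mul_le_Lp_mul_Lq _ hpq
    (hf.abs.ennreal_ofReal.mul (hu.pow_const _)).aemeasurable
    (hG.mul (hu.pow_const _)).aemeasurable).trans_eq ?_
  simp only [dualEnergy, Pi.mul_apply, ENNReal.mul_rpow_of_nonneg _ _ hp,
    ENNReal.mul_rpow_of_nonneg _ _ hq, ← ENNReal.rpow_mul, hexp,
    one_div_mul_cancel hpq.symm.ne_zero, ENNReal.rpow_one]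

lemma abs_abs_rpow_sub_two_mul (hq : 1 < q) (t : ℝ) : |(|t| ^ (q - 2) * t)| = |t| ^ (q - 1) := by
  rw [abs_mul, abs_of_nonneg (Real.rpow_nonneg (abs_nonneg t) _),
    ← Real.rpow_add_one' (abs_nonneg t) (by linarith)]
  ring_nf

lemma abs_rpow_sub_two_mul_mul_self (hq : 1 < q) (t : ℝ) : |t| ^ (q - 2) * t * t = |t| ^ q := by
  rw [mul_assoc, ← abs_mul_abs_self, ← mul_assoc,
    ← Real.rpow_add_one' (abs_nonneg t) (by linarith),
    ← Real.rpow_add_one' (abs_nonneg t) (by linarith)]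
  ring_nf

/-- The function `|g|^{q-2} g u`, for which the pairing with `g` and the dual energy both equal
`∫ |g|^q u`. -/
def extremizer (q : ℝ) (u : ℝ → ℝ≥0∞) (g : ℝ → ℝ) (x : ℝ) : ℝ :=
  |g x| ^ (q - 2) * g x * (u x).toReal

lemma measurable_extremizer {g : ℝ → ℝ} (hg : Measurable g) (hu : Measurable u) :
    Measurable (extremizer q u g) :=
  ((hg.abs.pow_const _).mul hg).mul hu.ennreal_toReal

lemma abs_extremizer (hq : 1 < q) (g : ℝ → ℝ) (x : ℝ) :
    |extremizer q u g x| = |g x| ^ (q - 1) * (u x).toReal := by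
  rw [extremizer, abs_mul, abs_abs_rpow_sub_two_mul hq, abs_of_nonneg ENNReal.toReal_nonneg]

lemma dualEnergy_extremizer (hpq : p.HolderConjugate q) (hu : ∀ x, u x ≠ ⊤) (g : ℝ → ℝ) :
    dualEnergy p u (extremizer q u g) = ∫⁻ x, ENNReal.ofReal |g x| ^ q * u x := by
  refine lintegral_congr fun x => ?_
  rw [abs_extremizer hpq.symm.lt, ENNReal.ofReal_mul (by positivity), ENNReal.ofReal_toReal (hu x),
    ← ENNReal.ofReal_rpow_of_nonneg (abs_nonneg _) hpq.symm.sub_one_pos.le,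
    ENNReal.mul_rpow_of_nonneg _ _ hpq.nonneg, ← ENNReal.rpow_mul, hpq.symm.sub_one_mul_conj]
  by_cases hux : u x = 0
  · simp [hux, hpq.pos]
  · rw [mul_assoc, ← ENNReal.rpow_add _ _ hux (hu x), add_sub_cancel, ENNReal.rpow_one]

lemma ofReal_abs_integral_extremizer_mul (hq : 1 < q) {g : ℝ → ℝ} (hg : Measurable g)
    (hu : Measurable u) (hfin : ∫⁻ x, ENNReal.ofReal |g x| ^ q * u x ≠ ⊤) :
    ENNReal.ofReal |∫ x, extremizer q u g x * g x| = ∫⁻ x, ENNReal.ofReal |g x| ^ q * u x := by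
  have hprod : ∀ x, extremizer q u g x * g x = (ENNReal.ofReal |g x| ^ q * u x).toReal := by
    intro x
    rw [ENNReal.toReal_mul, ENNReal.ofReal_rpow_of_nonneg (abs_nonneg _) (by linarith),
      ENNReal.toReal_ofReal (by positivity), ← abs_rpow_sub_two_mul_mul_self hq, extremizer]
    ring
  have hmeas : Measurable fun x => ENNReal.ofReal |g x| ^ q * u x :=
    (hg.abs.ennreal_ofReal.pow_const _).mul hu
  simp only [hprod]
  rw [integral_toReal hmeas.aemeasurable (ae_lt_top hmeas hfin),
    abs_of_nonneg ENNReal.toReal_nonneg, ENNReal.ofReal_toReal hfin]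

lemma le_rpow_mul_of_le_mul_rpow_mul_rpow (hpq : p.HolderConjugate q) {X B m : ℝ≥0∞}
    (hX : X ≠ ⊤) (h : X ≤ B * (X ^ (1 / p) * m ^ (1 / q))) : X ≤ B ^ q * m := by
  by_cases hX_zero : X = 0
  · simp [hX_zero]
  have root_le : X ^ (1 / q) ≤ B * m ^ (1 / q) := by
    refine (ENNReal.mul_le_mul_iff_right
      (ENNReal.rpow_pos (pos_iff_ne_zero.2 hX_zero) hX).ne'
      (ENNReal.rpow_ne_top_of_nonneg hpq.one_div_nonneg hX)).1 ?_
    calc X ^ (1 / p) * X ^ (1 / q) = X := by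
          rw [← ENNReal.rpow_add _ _ hX_zero hX, one_div, one_div, hpq.inv_add_inv_eq_one,
            ENNReal.rpow_one]
      _ ≤ X ^ (1 / p) * (B * m ^ (1 / q)) := h.trans_eq (by ring)
  calc X = (X ^ (1 / q)) ^ q := by
        rw [← ENNReal.rpow_mul, one_div_mul_cancel hpq.symm.ne_zero, ENNReal.rpow_one]
    _ ≤ (B * m ^ (1 / q)) ^ q := ENNReal.rpow_le_rpow root_le hpq.symm.nonneg
    _ = B ^ q * m := by
      rw [ENNReal.mul_rpow_of_nonneg _ _ hpq.symm.nonneg, ← ENNReal.rpow_mul,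
        one_div_mul_cancel hpq.symm.ne_zero, ENNReal.rpow_one]

end DualEnergy

section DualWeightOfTestFunction

variable {r : ℝ} {W : ℝ → ℝ}

lemma IsTestFunction.integrable_rpow (hW : IsTestFunction W) {b : ℝ} (hb : 0 < b) :
    Integrable fun x => W x ^ b :=
  (hW.continuous.rpow_const fun _ => Or.inr hb.le).integrable_of_hasCompactSupport
    (hW.hasCompactSupport.comp_left (g := fun t => t ^ b) (Real.zero_rpow hb.ne'))

lemma exists_ne_zero_le_HLMax {φ : ℝ → ℝ} (hφ : Continuous φ) {R : ℝ}
    (hφR : ∀ x, R < |x| → φ x = 0) : ∃ c : ℝ≥0∞, c ≠ 0 ∧ ∀ x, φ x ≠ 0 → c ≤ HLMax φ x := by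
  by_cases hφ_zero : ∀ x, φ x = 0
  · exact ⟨1, one_ne_zero, fun x hx => absurd (hφ_zero x) hx⟩
  obtain ⟨y, hy⟩ := not_forall.1 hφ_zero
  have mem_of_ne : ∀ x, φ x ≠ 0 → x ∈ Ioo (-(R + 1)) (R + 1) := fun x hx =>
    abs_lt.1 (by linarith [not_lt.1 (mt (hφR x) hx)])
  have hR := mem_of_ne y hy
  refine ⟨(ENNReal.ofReal (R + 1 - -(R + 1)))⁻¹ *
    ∫⁻ x in Ioo (-(R + 1)) (R + 1), ENNReal.ofReal |φ x|, mul_ne_zero (by simp) (ne_of_gt ?_),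
    fun x hx => average_le_HLMax φ (hR.1.trans hR.2) (Ioo_subset_Icc_self (mem_of_ne x hx))⟩
  rw [setLIntegral_pos_iff hφ.measurable.abs.ennreal_ofReal]
  have hopen : IsOpen (Function.support (fun x => ENNReal.ofReal |φ x|) ∩
      Ioo (-(R + 1)) (R + 1)) :=
    (ENNReal.continuous_ofReal.comp hφ.abs).isOpen_support.inter isOpen_Ioo
  exact hopen.measure_pos _ ⟨y, by simpa using hy, hR⟩

lemma exists_dualWeight_le (hr : 1 ≤ r) (hW : IsTestFunction W) :
    ∃ C : NNReal, ∀ x, dualWeight r W x ≤ C * ENNReal.ofReal (W x) := by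
  obtain ⟨K, _, hWK⟩ := hW.exists_abs_le
  obtain ⟨R, _, hWR⟩ := hW.exists_support_bound
  obtain ⟨c, hc, hcM⟩ := exists_ne_zero_le_HLMax (φ := fun x => |W x| ^ (2 * r - 1)) (R := R)
    (hW.continuous.abs.rpow_const fun _ => Or.inr (by linarith)) fun x hx => by
      rw [hWR x hx, abs_zero, Real.zero_rpow (by linarith)]
  have hC : ENNReal.ofReal K ^ (2 * r - 2) / c ^ 2 ≠ ⊤ :=
    ENNReal.div_ne_top (ENNReal.rpow_ne_top_of_nonneg (by linarith) ENNReal.ofReal_ne_top)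
      (pow_ne_zero 2 hc)
  refine ⟨(ENNReal.ofReal K ^ (2 * r - 2) / c ^ 2).toNNReal, fun x => ?_⟩
  rw [ENNReal.coe_toNNReal hC]
  by_cases hx : W x = 0
  · simp [dualWeight, hx, ENNReal.zero_rpow_of_pos (by linarith : 0 < 2 * r - 1)]
  calc dualWeight r W x ≤ ENNReal.ofReal (W x) ^ (2 * r - 1) / c ^ 2 := by
        rw [dualWeight]
        gcongr
        exact hcM x (Real.rpow_pos_of_pos (abs_pos.2 hx) _).ne'
    _ = ENNReal.ofReal (W x) ^ (2 * r - 2) / c ^ 2 * ENNReal.ofReal (W x) := by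
        rw [← ENNReal.mul_div_right_comm, show 2 * r - 1 = (2 * r - 2) + 1 by ring,
          ENNReal.rpow_add_of_add_pos ENNReal.ofReal_ne_top _ _ (by linarith), ENNReal.rpow_one]
    _ ≤ ENNReal.ofReal K ^ (2 * r - 2) / c ^ 2 * ENNReal.ofReal (W x) := by
        gcongr
        · linarith
        · exact (le_abs_self _).trans (hWK x)

lemma exists_rpow_le_dualWeight (hr : 1 ≤ r) (hW : IsTestFunction W) (hW_nonneg : ∀ x, 0 ≤ W x) :
    ∃ K : NNReal, ∀ x, ENNReal.ofReal (W x) ^ (2 * r - 1) ≤ K * dualWeight r W x := by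
  obtain ⟨K, _, hWK⟩ := hW.exists_abs_le
  set M := HLMax fun y => |W y| ^ (2 * r - 1)
  have hM_le : ∀ x, M x ≤ ENNReal.ofReal (K ^ (2 * r - 1)) := HLMax_le_ofReal fun x => by
    rw [Real.abs_rpow_of_nonneg (abs_nonneg _), abs_abs]
    exact Real.rpow_le_rpow (abs_nonneg _) (hWK x) (by linarith)
  have hM_ge : ∀ x, ENNReal.ofReal (W x) ^ (2 * r - 1) ≤ M x := fun x => by
    rw [← abs_of_nonneg (hW_nonneg x), ← ofReal_abs_abs_rpow (by linarith)]
    exact ofReal_abs_le_HLMax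
      (hW.continuous.abs.rpow_const fun _ => Or.inr (by linarith)).continuousAt
  refine ⟨(K ^ (2 * r - 1)).toNNReal ^ 2, fun x => ?_⟩
  by_cases hMx : M x = 0
  · exact (hM_ge x).trans (by simp [hMx])
  have hMx_top : M x ≠ ⊤ := ((hM_le x).trans_lt ENNReal.ofReal_lt_top).ne
  calc ENNReal.ofReal (W x) ^ (2 * r - 1)
      = M x ^ 2 * (ENNReal.ofReal (W x) ^ (2 * r - 1) / M x ^ 2) :=
        (ENNReal.mul_div_cancel (pow_ne_zero 2 hMx) (ENNReal.pow_ne_top hMx_top)).symm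
    _ ≤ ENNReal.ofReal (K ^ (2 * r - 1)) ^ 2 * dualWeight r W x := by
        gcongr
        · exact hM_le x
        · exact le_rfl
    _ = ((K ^ (2 * r - 1)).toNNReal ^ 2 : NNReal) * dualWeight r W x := by
        rw [ENNReal.coe_pow, ENNReal.ofReal]

end DualWeightOfTestFunction

section Approximation

variable {f g Φ : ℝ → ℝ}

lemma exists_isTestFunction_eLpNorm_sub_le (hf : Integrable f) {ε : ℝ} (hε : 0 < ε) :
    ∃ g, IsTestFunction g ∧ eLpNorm (g - f) 1 ≤ ENNReal.ofReal ε := by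
  obtain ⟨g, hg_supp, hg, hfg⟩ := MemLp.exist_eLpNorm_sub_le (p := 1) (by simp) le_rfl
    (memLp_one_iff_integrable.2 hf) hε
  exact ⟨g, ⟨hg.lipschitzWith_of_hasCompactSupport hg_supp (by simp), hg_supp⟩,
    by rwa [eLpNorm_sub_comm]⟩

lemma IsTestFunction.const_mul (hf : IsTestFunction f) (C : ℝ) :
    IsTestFunction fun x => C * f x := by
  obtain ⟨L, hL⟩ := hf.lipschitz
  exact ⟨⟨_, (lipschitzWith_smul C).comp hL⟩, hf.hasCompactSupport.mul_left⟩

lemma IsTestFunction.clip (hg : IsTestFunction g) (hΦ : IsTestFunction Φ) :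
    IsTestFunction fun x => max (-Φ x) (min (g x) (Φ x)) := by
  obtain ⟨L, hL⟩ := hg.lipschitz
  obtain ⟨L', hL'⟩ := hΦ.lipschitz
  refine ⟨⟨_, hL'.neg.max (hL.min hL')⟩, ?_⟩
  exact (hg.hasCompactSupport.comp₂_left hΦ.hasCompactSupport
    (m := fun s t => max (-t) (min s t)) (by simp))

lemma abs_clip_le {s t : ℝ} (ht : 0 ≤ t) : |max (-t) (min s t)| ≤ t :=
  abs_le.2 ⟨le_max_left _ _, max_le (by linarith) (min_le_right _ _)⟩

lemma clip_eq_self {s t : ℝ} (hst : |s| ≤ t) : max (-t) (min s t) = s := by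
  rw [min_eq_left (abs_le.1 hst).2, max_eq_right (abs_le.1 hst).1]

theorem exists_isTestFunction_seq_tendsto_ae (hΦ : IsTestFunction Φ) (hf : Measurable f)
    (hfΦ : ∀ x, |f x| ≤ Φ x) :
    ∃ F : ℕ → ℝ → ℝ, (∀ n, IsTestFunction (F n)) ∧ (∀ n x, |F n x| ≤ Φ x) ∧
      ∀ᵐ x, Tendsto (fun n => F n x) atTop (𝓝 (f x)) := by
  have hf_int : Integrable f :=
    hΦ.integrable.mono' hf.aestronglyMeasurable (Eventually.of_forall hfΦ)
  choose g hg hgf using fun n : ℕ =>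
    exists_isTestFunction_eLpNorm_sub_le hf_int (Nat.one_div_pos_of_nat (α := ℝ) (n := n))
  have hlim : Tendsto (fun n => eLpNorm (g n - f) 1) atTop (𝓝 0) := by
    refine tendsto_of_tendsto_of_tendsto_of_le_of_le tendsto_const_nhds ?_ (fun n => bot_le) hgf
    simpa using ENNReal.tendsto_ofReal (tendsto_one_div_add_atTop_nhds_zero_nat (𝕜 := ℝ))
  obtain ⟨ns, -, hae⟩ := (tendstoInMeasure_of_tendsto_eLpNorm one_ne_zero
    (fun n => (hg n).continuous.aestronglyMeasurable) hf.aestronglyMeasurable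
    hlim).exists_seq_tendsto_ae
  refine ⟨fun n x => max (-Φ x) (min (g (ns n) x) (Φ x)), fun n => (hg _).clip hΦ,
    fun n x => abs_clip_le ((abs_nonneg _).trans (hfΦ x)), hae.mono fun x hx => ?_⟩
  rw [← clip_eq_self (hfΦ x)]
  exact tendsto_const_nhds.max (hx.min tendsto_const_nhds)

end Approximation

section DualEstimate

/-- The weak-type estimate `λ w{|Hf| > λ} ≤ A ∫ |f| M_r w` for all weights `w` and all `f` for which
the right-hand side is finite. -/
def HasWeakType (r : ℝ) (A : NNReal) : Prop :=
  ∀ w f : ℝ → ℝ, IsWeight w → (∫⁻ x, ENNReal.ofReal |f x| * Mr r w x) < ⊤ →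
    ∀ lam : ℝ, 0 < lam →
      ENNReal.ofReal lam * (∫⁻ x in {x : ℝ | lam < |Hil f x|}, ENNReal.ofReal (w x)) ≤
        A * ∫⁻ x, ENNReal.ofReal |f x| * Mr r w x

variable {r p : ℝ} {A : NNReal} {W f : ℝ → ℝ} {C : ℝ}

lemma dualWeight_ne_zero (hr : 1 ≤ r) (hW : IsTestFunction W) (hW_nonneg : ∀ x, 0 ≤ W x) {x : ℝ}
    (hx : W x ≠ 0) : dualWeight r W x ≠ 0 := by
  obtain ⟨K, hK⟩ := exists_rpow_le_dualWeight hr hW hW_nonneg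
  intro hu
  have hWx : 0 < ENNReal.ofReal (W x) ^ (2 * r - 1) :=
    ENNReal.rpow_pos (ENNReal.ofReal_pos.2 ((hW_nonneg x).lt_of_ne' hx)) ENNReal.ofReal_ne_top
  simpa [hu] using hWx.trans_le (hK x)

lemma dualWeight_ne_top (hr : 1 ≤ r) (hW : IsTestFunction W) (x : ℝ) : dualWeight r W x ≠ ⊤ := by
  obtain ⟨K, hK⟩ := exists_dualWeight_le hr hW
  exact ((hK x).trans_lt (ENNReal.mul_lt_top ENNReal.coe_lt_top ENNReal.ofReal_lt_top)).ne

lemma exists_ofReal_mul_dualWeight_rpow_le (hr : 1 ≤ r) (hpr : p.HolderConjugate (2 * r))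
    (hW : IsTestFunction W) (hW_nonneg : ∀ x, 0 ≤ W x) :
    ∃ K : NNReal, ∀ x, ENNReal.ofReal (W x) * dualWeight r W x ^ (1 - p) ≤ K := by
  obtain ⟨K, hK⟩ := exists_rpow_le_dualWeight hr hW hW_nonneg
  have hp := hpr.sub_one_pos
  have hexp : (2 * r - 1) * (p - 1) = 1 := by linear_combination hpr.sub_one_mul_conj
  refine ⟨K ^ (p - 1), fun x => ?_⟩
  by_cases hx : W x = 0
  · simp [hx]
  set u := dualWeight r W x
  calc ENNReal.ofReal (W x) * u ^ (1 - p)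
      = (ENNReal.ofReal (W x) ^ (2 * r - 1)) ^ (p - 1) * u ^ (1 - p) := by
        rw [← ENNReal.rpow_mul, hexp, ENNReal.rpow_one]
    _ ≤ (K * u) ^ (p - 1) * u ^ (1 - p) := by
        gcongr
        exact hK x
    _ = (K : ℝ≥0∞) ^ (p - 1) * (u ^ (p - 1) * u ^ (1 - p)) := by
        rw [ENNReal.mul_rpow_of_nonneg _ _ hp.le, mul_assoc]
    _ = (K ^ (p - 1) : NNReal) := by
        rw [← ENNReal.rpow_add _ _ (dualWeight_ne_zero hr hW hW_nonneg hx)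
          (dualWeight_ne_top hr hW x), sub_add_sub_cancel, sub_self, ENNReal.rpow_zero, mul_one,
          ENNReal.coe_rpow_of_nonneg _ hp.le]

lemma dualEnergy_const_mul_ne_top (hr : 1 ≤ r) (hpr : p.HolderConjugate (2 * r))
    (hW : IsTestFunction W) (hW_nonneg : ∀ x, 0 ≤ W x) (C : ℝ) :
    dualEnergy p (dualWeight r W) (fun x => C * W x) ≠ ⊤ := by
  obtain ⟨K, hK⟩ := exists_ofReal_mul_dualWeight_rpow_le hr hpr hW hW_nonneg
  have hp := hpr.sub_one_pos
  set D := ENNReal.ofReal |C| ^ p * (K : ℝ≥0∞)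
  have hD : D ≠ ⊤ := ENNReal.mul_ne_top
    (ENNReal.rpow_ne_top_of_nonneg hpr.nonneg ENNReal.ofReal_ne_top) ENNReal.coe_ne_top
  have hle : ∀ x, ENNReal.ofReal |C * W x| ^ p * dualWeight r W x ^ (1 - p) ≤
      D * ENNReal.ofReal (W x ^ (p - 1)) := fun x => by
    set t := ENNReal.ofReal (W x)
    have hpow : t ^ p = t ^ (p - 1) * t := by
      conv_lhs => rw [← sub_add_cancel p 1]
      rw [ENNReal.rpow_add_of_add_pos ENNReal.ofReal_ne_top _ _ (by linarith), ENNReal.rpow_one]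
    calc ENNReal.ofReal |C * W x| ^ p * dualWeight r W x ^ (1 - p)
        = ENNReal.ofReal |C| ^ p * (t * dualWeight r W x ^ (1 - p)) * t ^ (p - 1) := by
          rw [abs_mul, abs_of_nonneg (hW_nonneg x), ENNReal.ofReal_mul (abs_nonneg C),
            ENNReal.mul_rpow_of_nonneg _ _ hpr.nonneg, hpow]
          ring
      _ ≤ D * t ^ (p - 1) := by
          gcongr
          exact mul_le_mul' le_rfl (hK x)
      _ = D * ENNReal.ofReal (W x ^ (p - 1)) := by
          rw [ENNReal.ofReal_rpow_of_nonneg (hW_nonneg x) hp.le]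
  refine ne_top_of_le_ne_top ?_ (lintegral_mono hle)
  rw [lintegral_const_mul' _ _ hD]
  exact ENNReal.mul_ne_top hD (hW.integrable_rpow hp).lintegral_lt_top.ne

lemma dualEnergy_ne_top_of_abs_le (hr : 1 ≤ r) (hpr : p.HolderConjugate (2 * r))
    (hW : IsTestFunction W) (hW_nonneg : ∀ x, 0 ≤ W x) (hfW : ∀ x, |f x| ≤ C * W x) :
    dualEnergy p (dualWeight r W) f ≠ ⊤ :=
  ne_top_of_le_ne_top (dualEnergy_const_mul_ne_top hr hpr hW hW_nonneg C)
    (dualEnergy_mono hpr.nonneg fun x => (hfW x).trans (le_abs_self _))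

lemma mul_setLIntegral_lt_abs_Hil_le (hA : HasWeakType r A) (hr : 1 ≤ r)
    (hpr : p.HolderConjugate (2 * r)) (hW : IsTestFunction W) (hW_nonneg : ∀ x, 0 ≤ W x)
    (hf : IsTestFunction f) (hfW : ∀ x, |f x| ≤ C * W x) {l : ℝ} (hl : 0 < l) :
    ENNReal.ofReal l * ∫⁻ x in {x | l < |Hil f x|}, ENNReal.ofReal (W x) ≤
      A * (dualEnergy p (dualWeight r W) f ^ (1 / p) *
        (16 * ∫⁻ x in {x | l < |Hil f x|}, ENNReal.ofReal (W x)) ^ (1 / (2 * r))) := by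
  set E := {x | l < |Hil f x|}
  have hE : MeasurableSet E := measurableSet_lt measurable_const hf.measurable_Hil.abs
  have hWE : IsWeight (E.indicator W) :=
    ⟨indicator_nonneg fun x _ => hW_nonneg x, (hW.integrable.indicator hE).locallyIntegrable⟩
  obtain ⟨K, -, hK⟩ := hW.exists_abs_le
  have hM : ∀ x, Mr r (E.indicator W) x ≤ ENNReal.ofReal K := Mr_le_ofReal (by linarith)
    fun x => (norm_indicator_le_norm_self W x).trans (hK x)
  have hfin : ∫⁻ x, ENNReal.ofReal |f x| * Mr r (E.indicator W) x < ⊤ := calc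
    ∫⁻ x, ENNReal.ofReal |f x| * Mr r (E.indicator W) x
      ≤ ∫⁻ x, ENNReal.ofReal |f x| * ENNReal.ofReal K := by
        gcongr with x
        exact hM x
    _ < ⊤ := by
        rw [lintegral_mul_const' _ _ ENNReal.ofReal_ne_top]
        exact ENNReal.mul_lt_top hf.integrable.abs.lintegral_lt_top ENNReal.ofReal_lt_top
  have hW_ne : ∀ x, f x ≠ 0 → W x ≠ 0 := fun x hfx hWx =>
    hfx (abs_nonpos_iff.1 (by simpa [hWx] using hfW x))
  calc ENNReal.ofReal l * ∫⁻ x in E, ENNReal.ofReal (W x)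
      = ENNReal.ofReal l * ∫⁻ x in E, ENNReal.ofReal (E.indicator W x) := by
        congr 1
        exact setLIntegral_congr_fun hE fun x hx => by rw [indicator_of_mem hx]
    _ ≤ A * ∫⁻ x, ENNReal.ofReal |f x| * Mr r (E.indicator W) x := hA _ f hWE hfin l hl
    _ ≤ A * (dualEnergy p (dualWeight r W) f ^ (1 / p) *
          (∫⁻ x, Mr r (E.indicator W) x ^ (2 * r) * dualWeight r W x) ^ (1 / (2 * r))) := by
        gcongr
        exact lintegral_mul_le_dualEnergy hpr (measurable_dualWeight r hW.continuous.measurable)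
          hf.continuous.measurable (fun x hx => dualWeight_ne_zero hr hW hW_nonneg (hW_ne x hx))
          (fun x _ => dualWeight_ne_top hr hW x) (measurable_Mr _ _)
    _ ≤ A * (dualEnergy p (dualWeight r W) f ^ (1 / p) *
          (16 * ∫⁻ x in E, ENNReal.ofReal (W x)) ^ (1 / (2 * r))) := by
        gcongr
        exact lintegral_Mr_indicator_rpow_mul_dualWeight_le (by linarith) hW.continuous.measurable
          hW_nonneg (hW.integrable_rpow (by linarith)) hE

lemma sixteen_rpow_one_div_two_mul_le (hr : 1 ≤ r) : (16 : ℝ) ^ (1 / (2 * r)) ≤ 4 := calc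
  (16 : ℝ) ^ (1 / (2 * r)) ≤ 16 ^ (1 / 2 : ℝ) := by
    gcongr
    · norm_num
    · linarith
  _ = 4 := by
    rw [← Real.sqrt_eq_rpow, show (16 : ℝ) = 4 ^ 2 by norm_num, Real.sqrt_sq (by norm_num)]

lemma mul_measureReal_lt_abs_Hil_le (hA : HasWeakType r A) (hr : 1 ≤ r)
    (hpr : p.HolderConjugate (2 * r)) (hW : IsTestFunction W) (hW_nonneg : ∀ x, 0 ≤ W x)
    (hf : IsTestFunction f) (hfW : ∀ x, |f x| ≤ C * W x) {t : ℝ} (ht : 0 < t) :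
    t * (powMeasure 1 W).real {x | t < |Hil f x|} ≤
      4 * A * (dualEnergy p (dualWeight r W) f).toReal ^ (1 / p) *
        (powMeasure 1 W).real {x | t < |Hil f x|} ^ (1 / (2 * r)) := by
  have : IsFiniteMeasure (powMeasure 1 W) :=
    isFiniteMeasure_powMeasure zero_le_one hW_nonneg (hW.integrable_rpow one_pos)
  have hP := dualEnergy_ne_top_of_abs_le hr hpr hW hW_nonneg hfW
  have hE : MeasurableSet {x | t < |Hil f x|} :=
    measurableSet_lt measurable_const hf.measurable_Hil.abs
  have weak := mul_setLIntegral_lt_abs_Hil_le hA hr hpr hW hW_nonneg hf hfW ht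
  set P := dualEnergy p (dualWeight r W) f
  have hset : ∫⁻ x in {x | t < |Hil f x|}, ENNReal.ofReal (W x) =
      powMeasure 1 W {x | t < |Hil f x|} := by
    simp only [powMeasure, withDensity_apply _ hE, ENNReal.rpow_one]
  have hr_inv : 0 ≤ 1 / (2 * r) := by positivity
  rw [hset] at weak
  replace weak := ENNReal.toReal_mono (ENNReal.mul_ne_top ENNReal.coe_ne_top
    (ENNReal.mul_ne_top (ENNReal.rpow_ne_top_of_nonneg hpr.one_div_nonneg hP)
      (ENNReal.rpow_ne_top_of_nonneg hr_inv
        (ENNReal.mul_ne_top (by simp) (measure_ne_top _ _))))) weak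
  simp only [ENNReal.toReal_mul, ← ENNReal.toReal_rpow, ENNReal.coe_toReal,
    ENNReal.toReal_ofReal ht.le, ENNReal.toReal_ofNat, ← measureReal_def] at weak
  set m := (powMeasure 1 W).real {x | t < |Hil f x|}
  have hm : 0 ≤ m := measureReal_nonneg
  calc t * m ≤ A * (P.toReal ^ (1 / p) * (16 * m) ^ (1 / (2 * r))) := weak
    _ = A * (P.toReal ^ (1 / p) * (16 ^ (1 / (2 * r)) * m ^ (1 / (2 * r)))) := by
        rw [Real.mul_rpow (by norm_num) hm]
    _ ≤ A * (P.toReal ^ (1 / p) * (4 * m ^ (1 / (2 * r)))) := by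
        gcongr
        exact sixteen_rpow_one_div_two_mul_le hr
    _ = 4 * A * P.toReal ^ (1 / p) * m ^ (1 / (2 * r)) := by ring

theorem lintegral_abs_Hil_mul_le (hA : HasWeakType r A) (hr : 1 ≤ r) (hr2 : r ≤ 2)
    (hpr : p.HolderConjugate (2 * r)) (hW : IsTestFunction W) (hW_nonneg : ∀ x, 0 ≤ W x)
    (hf : IsTestFunction f) (hfW : ∀ x, |f x| ≤ C * W x) :
    ∫⁻ x, ENNReal.ofReal |Hil f x| * ENNReal.ofReal (W x) ≤
      16 * A * (dualEnergy p (dualWeight r W) f ^ (1 / p) *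
        (∫⁻ x, ENNReal.ofReal (W x)) ^ (1 / (2 * r))) := by
  set P := dualEnergy p (dualWeight r W) f
  have hH_meas := hf.measurable_Hil.abs
  set μ := powMeasure 1 W with hμ
  have : IsFiniteMeasure μ :=
    isFiniteMeasure_powMeasure zero_le_one hW_nonneg (hW.integrable_rpow one_pos)
  calc ∫⁻ x, ENNReal.ofReal |Hil f x| * ENNReal.ofReal (W x)
      = ∫⁻ x, ENNReal.ofReal |Hil f x| ∂μ := by
        rw [hμ, powMeasure, lintegral_withDensity_eq_lintegral_mul _
          (hW.continuous.measurable.ennreal_ofReal.pow_const _) hH_meas.ennreal_ofReal]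
        simp only [Pi.mul_apply, ENNReal.rpow_one, mul_comm]
    _ ≤ ENNReal.ofReal (2 * r * (4 * A * P.toReal ^ (1 / p) * μ.real univ ^ (1 / (2 * r)))) :=
        lintegral_ofReal_le_of_mul_measure_lt_le hpr hH_meas.aemeasurable
          (fun x => abs_nonneg _) (by positivity)
          fun t ht => mul_measureReal_lt_abs_Hil_le hA hr hpr hW hW_nonneg hf hfW ht
    _ ≤ 16 * A * (P ^ (1 / p) * μ univ ^ (1 / (2 * r))) := by
        refine ENNReal.ofReal_le_of_le_toReal ?_
        simp only [ENNReal.toReal_mul, ← ENNReal.toReal_rpow, Measure.real, ENNReal.coe_toReal,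
          ENNReal.toReal_ofNat]
        set D := (A : ℝ) * (P.toReal ^ (1 / p) * (μ univ).toReal ^ (1 / (2 * r)))
        have : 0 ≤ D := by positivity
        calc 2 * r * (4 * A * P.toReal ^ (1 / p) * (μ univ).toReal ^ (1 / (2 * r)))
            = 8 * (r * D) := by ring
          _ ≤ 8 * (2 * D) := by gcongr
          _ = 16 * A * (P.toReal ^ (1 / p) * (μ univ).toReal ^ (1 / (2 * r))) := by ring
    _ = 16 * A * (P ^ (1 / p) * (∫⁻ x, ENNReal.ofReal (W x)) ^ (1 / (2 * r))) := by
        simp only [hμ, powMeasure, withDensity_apply _ MeasurableSet.univ, setLIntegral_univ,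
          ENNReal.rpow_one]

lemma ofReal_abs_integral_mul_Hil_le (hA : HasWeakType r A) (hr : 1 ≤ r) (hr2 : r ≤ 2)
    (hpr : p.HolderConjugate (2 * r)) (hW : IsTestFunction W) (hW_nonneg : ∀ x, 0 ≤ W x)
    (hf : IsTestFunction f) (hfW : ∀ x, |f x| ≤ C * W x) :
    ENNReal.ofReal |∫ x, f x * Hil W x| ≤
      16 * A * (dualEnergy p (dualWeight r W) f ^ (1 / p) *
        (∫⁻ x, ENNReal.ofReal (W x)) ^ (1 / (2 * r))) := by
  refine le_trans ?_ (lintegral_abs_Hil_mul_le hA hr hr2 hpr hW hW_nonneg hf hfW)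
  rw [hW.integral_mul_Hil_eq_neg hf, abs_neg, ← Real.norm_eq_abs, ofReal_norm]
  refine (enorm_integral_le_lintegral_enorm _).trans_eq (lintegral_congr fun x => ?_)
  rw [enorm_mul, Real.enorm_eq_ofReal (hW_nonneg x), Real.enorm_eq_ofReal_abs, mul_comm]

lemma tendsto_dualEnergy (hr : 1 ≤ r) (hpr : p.HolderConjugate (2 * r)) (hW : IsTestFunction W)
    (hW_nonneg : ∀ x, 0 ≤ W x) {F : ℕ → ℝ → ℝ} (hF : ∀ n, Measurable (F n))
    (hFW : ∀ n x, |F n x| ≤ C * W x)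
    (hlim : ∀ᵐ x, Tendsto (fun n => F n x) atTop (𝓝 (f x))) :
    Tendsto (fun n => dualEnergy p (dualWeight r W) (F n)) atTop
      (𝓝 (dualEnergy p (dualWeight r W) f)) := by
  have hu := measurable_dualWeight r hW.continuous.measurable
  refine tendsto_lintegral_of_dominated_convergence _
    (fun n => ((hF n).abs.ennreal_ofReal.pow_const _).mul (hu.pow_const _))
    (fun n => .of_forall fun x => ?_) (dualEnergy_const_mul_ne_top hr hpr hW hW_nonneg C)
    (hlim.mono fun x hx => ?_)
  · dsimp only
    gcongr ENNReal.ofReal ?_ ^ p * _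
    · exact hpr.nonneg
    · exact (hFW n x).trans (le_abs_self _)
  · by_cases hWx : W x = 0
    · have hF_zero : ∀ n, F n x = 0 := fun n => abs_nonpos_iff.1 (by simpa [hWx] using hFW n x)
      have hf_zero : f x = 0 := by
        simp only [hF_zero] at hx
        exact tendsto_nhds_unique hx tendsto_const_nhds
      simp [hF_zero, hf_zero, hpr.pos]
    · refine ENNReal.Tendsto.mul_const ?_ (Or.inr ?_)
      · exact (ENNReal.continuous_rpow_const.tendsto _).comp (ENNReal.tendsto_ofReal hx.abs)
      · exact ENNReal.rpow_ne_top_of_ne_zero (dualWeight_ne_zero hr hW hW_nonneg hWx)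
          (dualWeight_ne_top hr hW x)

theorem ofReal_abs_integral_mul_Hil_le_of_measurable (hA : HasWeakType r A) (hr : 1 ≤ r)
    (hr2 : r ≤ 2) (hpr : p.HolderConjugate (2 * r)) (hW : IsTestFunction W)
    (hW_nonneg : ∀ x, 0 ≤ W x) (hf : Measurable f) (hfW : ∀ x, |f x| ≤ C * W x) :
    ENNReal.ofReal |∫ x, f x * Hil W x| ≤
      16 * A * (dualEnergy p (dualWeight r W) f ^ (1 / p) *
        (∫⁻ x, ENNReal.ofReal (W x)) ^ (1 / (2 * r))) := by
  obtain ⟨F, hF, hFW, hlim⟩ :=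
    exists_isTestFunction_seq_tendsto_ae (hW.const_mul C) hf hfW
  obtain ⟨K, -, hK⟩ := hW.exists_abs_Hil_le
  have lhs_tendsto : Tendsto (fun n => ENNReal.ofReal |∫ x, F n x * Hil W x|) atTop
      (𝓝 (ENNReal.ofReal |∫ x, f x * Hil W x|)) := by
    refine ENNReal.tendsto_ofReal (Tendsto.abs (tendsto_integral_of_dominated_convergence
      (fun x => C * W x * K) (fun n => ?_) ((hW.const_mul C).integrable.mul_const K)
      (fun n => .of_forall fun x => ?_) (hlim.mono fun x hx => hx.mul_const _)))
    · exact ((hF n).continuous.measurable.mul hW.measurable_Hil).aestronglyMeasurable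
    · rw [norm_mul]
      exact mul_le_mul (hFW n x) (hK x) (abs_nonneg _) ((abs_nonneg _).trans (hfW x))
  have energy_tendsto := tendsto_dualEnergy hr hpr hW hW_nonneg
    (fun n => (hF n).continuous.measurable) hFW hlim
  have hm : (∫⁻ x, ENNReal.ofReal (W x)) ^ (1 / (2 * r)) ≠ ⊤ :=
    ENNReal.rpow_ne_top_of_nonneg hpr.symm.one_div_nonneg hW.integrable.lintegral_lt_top.ne
  refine le_of_tendsto_of_tendsto' lhs_tendsto (ENNReal.Tendsto.const_mul
    (ENNReal.Tendsto.mul_const ((ENNReal.continuous_rpow_const.tendsto _).comp energy_tendsto)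
      (Or.inr hm)) (Or.inr (by finiteness)))
    fun n => ofReal_abs_integral_mul_Hil_le hA hr hr2 hpr hW hW_nonneg (hF n) (hFW n)

lemma lintegral_abs_Hil_rpow_mul_dualWeight_ne_top (hr : 1 ≤ r) (hW : IsTestFunction W) :
    ∫⁻ x, ENNReal.ofReal |Hil W x| ^ (2 * r) * dualWeight r W x ≠ ⊤ := by
  obtain ⟨K, -, hK⟩ := hW.exists_abs_Hil_le
  obtain ⟨C, hC⟩ := exists_dualWeight_le hr hW
  have hbound : ENNReal.ofReal K ^ (2 * r) * C ≠ ⊤ := ENNReal.mul_ne_top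
    (ENNReal.rpow_ne_top_of_nonneg (by linarith) ENNReal.ofReal_ne_top) ENNReal.coe_ne_top
  refine ne_top_of_le_ne_top (ENNReal.mul_ne_top hbound hW.integrable.lintegral_lt_top.ne) ?_
  rw [← lintegral_const_mul' _ _ hbound]
  refine lintegral_mono fun x => ?_
  rw [mul_assoc]
  exact mul_le_mul' (ENNReal.rpow_le_rpow (ENNReal.ofReal_le_ofReal (hK x)) (by linarith)) (hC x)

lemma exists_abs_extremizer_Hil_le (hr : 1 ≤ r) (hW : IsTestFunction W)
    (hW_nonneg : ∀ x, 0 ≤ W x) :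
    ∃ C : ℝ, ∀ x, |extremizer (2 * r) (dualWeight r W) (Hil W) x| ≤ C * W x := by
  obtain ⟨K, hK_pos, hK⟩ := hW.exists_abs_Hil_le
  obtain ⟨C, hC⟩ := exists_dualWeight_le hr hW
  refine ⟨K ^ (2 * r - 1) * C, fun x => ?_⟩
  have hu : (dualWeight r W x).toReal ≤ C * W x := by
    refine ENNReal.toReal_le_of_le_ofReal (mul_nonneg C.coe_nonneg (hW_nonneg x)) ?_
    rw [ENNReal.ofReal_mul C.coe_nonneg, ENNReal.ofReal_coe_nnreal]
    exact hC x
  rw [abs_extremizer (by linarith), mul_assoc]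
  gcongr
  · linarith
  · exact hK x

theorem lintegral_abs_Hil_rpow_mul_dualWeight_le (hA : HasWeakType r A) (hr : 1 ≤ r)
    (hr2 : r ≤ 2) (hW : IsTestFunction W) (hW_nonneg : ∀ x, 0 ≤ W x) :
    ∫⁻ x, ENNReal.ofReal |Hil W x| ^ (2 * r) * dualWeight r W x ≤
      (16 * A : ℝ≥0∞) ^ (2 * r) * ∫⁻ x, ENNReal.ofReal (W x) := by
  have hpr := (Real.HolderConjugate.conjExponent (by linarith : 1 < 2 * r)).symm
  have hu := measurable_dualWeight r hW.continuous.measurable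
  have hfin := lintegral_abs_Hil_rpow_mul_dualWeight_ne_top hr hW
  obtain ⟨C, hC⟩ := exists_abs_extremizer_Hil_le hr hW hW_nonneg
  refine le_rpow_mul_of_le_mul_rpow_mul_rpow hpr hfin ?_
  have hdual := ofReal_abs_integral_mul_Hil_le_of_measurable hA hr hr2 hpr hW hW_nonneg
    (measurable_extremizer hW.measurable_Hil hu) hC
  rwa [dualEnergy_extremizer hpr (dualWeight_ne_top hr hW),
    ofReal_abs_integral_extremizer_mul hpr.symm.lt hW.measurable_Hil hu hfin] at hdual

end DualEstimate

section TestWeight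

variable {r : ℝ}

lemma two_mul_sub_one_le_div_two_sub (hr2 : r < 2) : 2 * r - 1 ≤ r / (2 - r) := by
  rw [le_div_iff₀ (by linarith)]
  nlinarith [sq_nonneg (r - 1)]

lemma rpow_neg_mul_rpow_le_rpow_div_rpow (hr : 0 < r) (hr2 : r < 2) {w N a : ℝ} (hw : 0 < w)
    (hN : 0 < N) (hwa : w ≤ a) (hNa : N ≤ a ^ (2 * r - 1)) :
    a ^ (-(2 * (r / (2 - r)) / r)) * w ^ (r / (2 - r)) ≤ w ^ (3 - 2 / r) / N ^ (2 / r) := by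
  have ha : 0 < a := hw.trans_le hwa
  have h2r : 0 < 2 - r := by linarith
  have hα_ge := two_mul_sub_one_le_div_two_sub hr2
  set α := r / (2 - r) with hα
  have exponent_eq : α - (3 - 2 / r) = 2 * (α - (2 * r - 1)) / r := by
    rw [hα]
    field_simp
    ring
  have exponent_nonneg : 0 ≤ α - (3 - 2 / r) := by
    rw [exponent_eq]
    exact div_nonneg (by linarith) hr.le
  have hN_le : N ^ (2 / r) ≤ a ^ (2 * (2 * r - 1) / r) := by
    calc N ^ (2 / r) ≤ (a ^ (2 * r - 1)) ^ (2 / r) := by gcongr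
      _ = a ^ (2 * (2 * r - 1) / r) := by
        rw [← Real.rpow_mul ha.le]
        ring_nf
  calc a ^ (-(2 * α / r)) * w ^ α
      = a ^ (-(2 * α / r)) * (w ^ (α - (3 - 2 / r)) * w ^ (3 - 2 / r)) := by
        rw [← Real.rpow_add hw, sub_add_cancel]
    _ ≤ a ^ (-(2 * α / r)) * (a ^ (α - (3 - 2 / r)) * w ^ (3 - 2 / r)) := by gcongr
    _ = w ^ (3 - 2 / r) / a ^ (2 * (2 * r - 1) / r) := by
        rw [← mul_assoc, ← Real.rpow_add ha, div_eq_mul_inv (w ^ (3 - 2 / r)),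
          ← Real.rpow_neg ha.le, mul_comm, exponent_eq]
        ring_nf
    _ ≤ w ^ (3 - 2 / r) / N ^ (2 / r) := by gcongr

lemma sq_div_rpow_mul_rpow_le (hr : 0 < r) (hr2 : r < 2) {h w N a : ℝ} (hh : 0 ≤ h) (hw : 0 < w)
    (hN : 0 < N) (hwa : w ≤ a) (hNa : N ≤ a ^ (2 * r - 1)) :
    (h / a ^ (r / (2 - r) / r)) ^ 2 * w ^ (r / (2 - r)) ≤
      (h ^ (2 * r) * (w ^ (2 * r - 1) / N ^ 2)) ^ (1 / r) * w ^ (1 - 1 / r) := by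
  have ha : 0 < a := hw.trans_le hwa
  have hexp : 2 * r * (1 / r) = (2 : ℕ) := by
    field_simp
    norm_num
  calc (h / a ^ (r / (2 - r) / r)) ^ 2 * w ^ (r / (2 - r))
      = h ^ 2 * (a ^ (-(2 * (r / (2 - r)) / r)) * w ^ (r / (2 - r))) := by
        rw [div_pow, Real.rpow_neg ha.le, ← Real.rpow_mul_natCast ha.le, div_eq_mul_inv, mul_assoc]
        push_cast
        ring_nf
    _ ≤ h ^ 2 * (w ^ (3 - 2 / r) / N ^ (2 / r)) := by
        gcongr
        exact rpow_neg_mul_rpow_le_rpow_div_rpow hr hr2 hw hN hwa hNa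
    _ = h ^ 2 * (w ^ ((2 * r - 1) * (1 / r)) / N ^ (2 * (1 / r))) * w ^ (1 - 1 / r) := by
        rw [mul_assoc, div_mul_eq_mul_div, ← Real.rpow_add hw, mul_one_div]
        congr 3 <;> field_simp
        ring
    _ = (h ^ (2 * r) * (w ^ (2 * r - 1) / N ^ 2)) ^ (1 / r) * w ^ (1 - 1 / r) := by
        rw [Real.mul_rpow (by positivity) (by positivity),
          Real.div_rpow (by positivity) (by positivity), ← Real.rpow_mul hh, ← Real.rpow_mul hw.le,
          hexp, Real.rpow_natCast, Real.rpow_mul hN.le, Real.rpow_two]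

lemma ofReal_le_Mr {s : ℝ} (hs : 0 < s) {f : ℝ → ℝ} (hf : Continuous f) (x : ℝ) :
    ENNReal.ofReal |f x| ≤ Mr s f x := by
  have h := ofReal_abs_le_HLMax (f := fun y => |f y| ^ s) (x := x)
    (hf.abs.rpow_const fun _ => Or.inr hs.le).continuousAt
  rw [ofReal_abs_abs_rpow hs.le] at h
  calc ENNReal.ofReal |f x| = (ENNReal.ofReal |f x| ^ s) ^ (1 / s) := by
        rw [← ENNReal.rpow_mul, mul_one_div_cancel hs.ne', ENNReal.rpow_one]
    _ ≤ Mr s f x := ENNReal.rpow_le_rpow h (by positivity)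

lemma HLMax_abs_rpow_eq_Mr_rpow {s : ℝ} (hs : s ≠ 0) (f : ℝ → ℝ) (x : ℝ) :
    HLMax (fun y => |f y| ^ s) x = Mr s f x ^ s := by
  rw [Mr, ← ENNReal.rpow_mul, one_div_mul_cancel hs, ENNReal.rpow_one]

lemma sq_ofReal_div_rpow_mul_ofReal_rpow_le (hr : 0 < r) (hr2 : r < 2) {h w : ℝ} {N a : NNReal}
    (hh : 0 ≤ h) (hw : 0 < w) (hN : 0 < N) (hwa : w ≤ a) (hNa : (N : ℝ) ≤ a ^ (2 * r - 1)) :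
    (ENNReal.ofReal h / (a : ℝ≥0∞) ^ (r / (2 - r) / r)) ^ 2 * ENNReal.ofReal (w ^ (r / (2 - r))) ≤
      (ENNReal.ofReal h ^ (2 * r) * (ENNReal.ofReal w ^ (2 * r - 1) / (N : ℝ≥0∞) ^ 2)) ^ (1 / r) *
        ENNReal.ofReal w ^ (1 - 1 / r) := by
  have ha : 0 < (a : ℝ) := hw.trans_le hwa
  have hN : 0 < (N : ℝ) := hN
  rw [← ENNReal.ofReal_coe_nnreal (p := a), ← ENNReal.ofReal_coe_nnreal (p := N),
    ENNReal.ofReal_rpow_of_pos ha, ← ENNReal.ofReal_div_of_pos (by positivity),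
    ← ENNReal.ofReal_pow (by positivity), ← ENNReal.ofReal_mul (by positivity),
    ENNReal.ofReal_rpow_of_nonneg hh (by positivity), ENNReal.ofReal_rpow_of_pos hw,
    ← ENNReal.ofReal_pow (by positivity), ← ENNReal.ofReal_div_of_pos (by positivity),
    ← ENNReal.ofReal_mul (by positivity),
    ENNReal.ofReal_rpow_of_nonneg (by positivity) (by positivity), ENNReal.ofReal_rpow_of_pos hw,
    ← ENNReal.ofReal_mul (by positivity)]
  exact ENNReal.ofReal_le_ofReal (sq_div_rpow_mul_rpow_le hr hr2 hh hw hN hwa hNa)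

lemma sq_ofReal_div_Mr_mul_le (hr : 1 ≤ r) (hr2 : r < 2) {W : ℝ → ℝ} (hW : IsTestFunction W)
    (hW_nonneg : ∀ x, 0 ≤ W x) {h : ℝ} (hh : 0 ≤ h) (x : ℝ) :
    (ENNReal.ofReal h / Mr (r / (2 - r)) W x ^ (r / (2 - r) / r)) ^ 2 *
        ENNReal.ofReal (W x ^ (r / (2 - r))) ≤
      (ENNReal.ofReal h ^ (2 * r) * dualWeight r W x) ^ (1 / r) *
        ENNReal.ofReal (W x) ^ (1 - 1 / r) := by
  have hν : 0 < 2 * r - 1 := by linarith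
  have hα : 0 < r / (2 - r) := div_pos (by linarith) (by linarith)
  obtain hWx | hWx := (hW_nonneg x).eq_or_lt
  · simp [← hWx, Real.zero_rpow hα.ne']
  obtain ⟨K, -, hK⟩ := hW.exists_abs_le
  have Mr_ne_top {s : ℝ} (hs : 0 < s) : Mr s W x ≠ ⊤ :=
    ne_top_of_le_ne_top ENNReal.ofReal_ne_top (Mr_le_ofReal hs hK x)
  have ofReal_W_le {s : ℝ} (hs : 0 < s) : ENNReal.ofReal (W x) ≤ Mr s W x :=
    (ENNReal.ofReal_le_ofReal (le_abs_self _)).trans (ofReal_le_Mr hs hW.continuous x)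
  have W_le := ENNReal.toReal_mono (Mr_ne_top hα) (ofReal_W_le hα)
  rw [ENNReal.toReal_ofReal hWx.le] at W_le
  have N_le := ENNReal.toReal_mono (ENNReal.rpow_ne_top_of_nonneg hν.le (Mr_ne_top hα))
    (ENNReal.rpow_le_rpow (Mr_le_Mr_of_exponent_le hν (two_mul_sub_one_le_div_two_sub hr2)
      hW.continuous.aemeasurable x) hν.le)
  rw [← ENNReal.toReal_rpow (Mr (r / (2 - r)) W x)] at N_le
  have N_ne_top := ENNReal.rpow_ne_top_of_nonneg hν.le (Mr_ne_top hν)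
  have N_pos : 0 < Mr (2 * r - 1) W x ^ (2 * r - 1) := ENNReal.rpow_pos
    ((ENNReal.ofReal_pos.2 hWx).trans_le (ofReal_W_le hν)) (Mr_ne_top hν)
  rw [dualWeight, HLMax_abs_rpow_eq_Mr_rpow hν.ne', ← ENNReal.coe_toNNReal (Mr_ne_top hα),
    ← ENNReal.coe_toNNReal N_ne_top]
  exact sq_ofReal_div_rpow_mul_ofReal_rpow_le (by linarith) hr2 hh hWx
    (ENNReal.toNNReal_pos N_pos.ne' N_ne_top) W_le N_le

/-- The integrand `(|Hw| / (M_α w)^{α/r})² w^α`, `α = r/(2-r)`, of the extrapolated estimate. -/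
def hilRatioIntegrand (r : ℝ) (w : ℝ → ℝ) (x : ℝ) : ℝ≥0∞ :=
  (ENNReal.ofReal |Hil w x| / Mr (r / (2 - r)) w x ^ (r / (2 - r) / r)) ^ 2 *
    ENNReal.ofReal (w x ^ (r / (2 - r)))

theorem lintegral_hilRatioIntegrand_le_of_isTestFunction {A : NNReal} (hA : HasWeakType r A)
    (hr : 1 ≤ r) (hr2 : r < 2) {W : ℝ → ℝ} (hW : IsTestFunction W) (hW_nonneg : ∀ x, 0 ≤ W x) :
    ∫⁻ x, hilRatioIntegrand r W x ≤ (16 * A) ^ 2 * ∫⁻ x, ENNReal.ofReal (W x) := by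
  have hr_pos : 0 < r := by linarith
  have hr_inv : 0 ≤ 1 - 1 / r := by
    rw [sub_nonneg, div_le_one hr_pos]
    exact hr
  have hexp : 2 * r * (1 / r) = (2 : ℕ) := by
    field_simp
    norm_num
  set m := ∫⁻ x, ENNReal.ofReal (W x)
  calc _ ≤ ∫⁻ x, (ENNReal.ofReal |Hil W x| ^ (2 * r) * dualWeight r W x) ^ (1 / r) *
          ENNReal.ofReal (W x) ^ (1 - 1 / r) :=
        lintegral_mono fun x => sq_ofReal_div_Mr_mul_le hr hr2 hW hW_nonneg (abs_nonneg _) x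
    _ ≤ (∫⁻ x, ENNReal.ofReal |Hil W x| ^ (2 * r) * dualWeight r W x) ^ (1 / r) *
          m ^ (1 - 1 / r) :=
        ENNReal.lintegral_mul_norm_pow_le
          ((hW.measurable_Hil.abs.ennreal_ofReal.pow_const _).mul
            (measurable_dualWeight r hW.continuous.measurable)).aemeasurable
          hW.continuous.measurable.ennreal_ofReal.aemeasurable (by positivity) hr_inv (by ring)
    _ ≤ ((16 * A : ℝ≥0∞) ^ (2 * r) * m) ^ (1 / r) * m ^ (1 - 1 / r) := by
        gcongr
        exact lintegral_abs_Hil_rpow_mul_dualWeight_le hA hr hr2.le hW hW_nonneg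
    _ = (16 * A) ^ 2 * m := by
        rw [ENNReal.mul_rpow_of_nonneg _ _ (by positivity), ← ENNReal.rpow_mul, hexp,
          ENNReal.rpow_natCast, mul_assoc, ← ENNReal.rpow_add_of_nonneg _ _ (by positivity) hr_inv,
          add_sub_cancel, ENNReal.rpow_one]

end TestWeight

section WeightApproximation

variable {w g : ℝ → ℝ} {α ε : ℝ}

lemma IsTestFunction.max_zero_min_const (hg : IsTestFunction g) {k : ℝ} (hk : 0 ≤ k) :
    IsTestFunction fun x => max 0 (min (g x) k) := by
  obtain ⟨L, hL⟩ := hg.lipschitz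
  exact ⟨⟨L, (hL.min_const k).const_max 0⟩,
    hg.hasCompactSupport.comp_left (g := fun t => max 0 (min t k)) (by simp [hk])⟩

lemma exists_lintegral_abs_min_const_sub_le (hw : Integrable w) (hw_nonneg : ∀ x, 0 ≤ w x)
    (hε : 0 < ε) :
    ∃ k : ℝ, 0 < k ∧ ∫⁻ x, ENNReal.ofReal |min (w x) k - w x| ≤ ENNReal.ofReal ε := by
  have hlim : Tendsto (fun n : ℕ => ∫⁻ x, ENNReal.ofReal |min (w x) n - w x|) atTop
      (𝓝 (∫⁻ _ : ℝ, 0)) := by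
    have hw_meas := hw.aestronglyMeasurable.aemeasurable
    refine tendsto_lintegral_of_dominated_convergence' (fun x => ENNReal.ofReal |w x|)
      (fun n => ((hw_meas.min aemeasurable_const).sub hw_meas).abs.ennreal_ofReal)
      (fun n => .of_forall fun x => ENNReal.ofReal_le_ofReal ?_) hw.abs.lintegral_lt_top.ne
      (.of_forall fun x => tendsto_const_nhds.congr' ?_)
    · have hmin : 0 ≤ min (w x) n := le_min (hw_nonneg x) n.cast_nonneg
      rw [abs_sub_comm, abs_of_nonneg (sub_nonneg.2 (min_le_left _ _)), abs_of_nonneg (hw_nonneg x)]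
      linarith
    · filter_upwards [eventually_ge_atTop ⌈w x⌉₊] with n hn
      simp [min_eq_left (Nat.ceil_le.1 hn)]
  rw [lintegral_zero] at hlim
  obtain ⟨n, hn, hn_pos⟩ := ((hlim.eventually_le_const (ENNReal.ofReal_pos.2 hε)).and
    (eventually_gt_atTop 0)).exists
  exact ⟨n, Nat.cast_pos.2 hn_pos, hn⟩

lemma abs_rpow_le_mul_abs {k t : ℝ} (hα : 1 ≤ α) (ht : |t| ≤ k) :
    |t| ^ α ≤ k ^ (α - 1) * |t| := by
  calc |t| ^ α = |t| ^ (α - 1) * |t| := by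
        rw [← Real.rpow_add_one' (abs_nonneg t) (by linarith), sub_add_cancel]
    _ ≤ k ^ (α - 1) * |t| := by
        gcongr

lemma exists_isTestFunction_approx_bounded {v : ℝ → ℝ} {k : ℝ} (hα : 1 ≤ α) (hv : Integrable v)
    (hk : 0 < k) (hv_mem : ∀ x, v x ∈ Icc 0 k) (hε : 0 < ε) :
    ∃ W, IsTestFunction W ∧ (∀ x, 0 ≤ W x) ∧
      ∫⁻ x, ENNReal.ofReal |W x - v x| ≤ ENNReal.ofReal ε ∧
      ∫⁻ x, ENNReal.ofReal |(|W x - v x| ^ α)| ≤ ENNReal.ofReal ε := by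
  have hk_rpow : 0 < k ^ (α - 1) := Real.rpow_pos_of_pos hk _
  obtain ⟨g, hg, hgv⟩ := exists_isTestFunction_eLpNorm_sub_le hv
    (lt_min hε (div_pos hε hk_rpow))
  have W_mem : ∀ x, max 0 (min (g x) k) ∈ Icc 0 k :=
    fun x => ⟨le_max_left _ _, max_le hk.le (min_le_right _ _)⟩
  have W_sub_le : ∀ x, |max 0 (min (g x) k) - v x| ≤ |g x - v x| := fun x => by
    calc |max 0 (min (g x) k) - v x| = |max 0 (min (g x) k) - max 0 (min (v x) k)| := by
          rw [min_eq_left (hv_mem x).2, max_eq_right (hv_mem x).1]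
      _ ≤ |min (g x) k - min (v x) k| := by
          simpa only [max_comm (0 : ℝ)] using abs_max_sub_max_le_abs (min (g x) k) (min (v x) k) 0
      _ ≤ |g x - v x| := by
          simpa using abs_min_sub_min_le_max (g x) k (v x) k
  have W_lintegral_le : ∫⁻ x, ENNReal.ofReal |max 0 (min (g x) k) - v x| ≤
      ENNReal.ofReal (min ε (ε / k ^ (α - 1))) := by
    rw [eLpNorm_one_eq_lintegral_enorm] at hgv
    refine (lintegral_mono fun x => ?_).trans hgv
    rw [Real.enorm_eq_ofReal_abs]
    exact ENNReal.ofReal_le_ofReal (W_sub_le x)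
  refine ⟨_, hg.max_zero_min_const hk.le, fun x => (W_mem x).1,
    W_lintegral_le.trans (ENNReal.ofReal_le_ofReal (min_le_left _ _)), ?_⟩
  calc ∫⁻ x, ENNReal.ofReal |(|max 0 (min (g x) k) - v x| ^ α)|
      ≤ ∫⁻ x, ENNReal.ofReal (k ^ (α - 1)) * ENNReal.ofReal |max 0 (min (g x) k) - v x| := by
        refine lintegral_mono fun x => ?_
        rw [← ENNReal.ofReal_mul hk_rpow.le, abs_of_nonneg (by positivity)]
        refine ENNReal.ofReal_le_ofReal (abs_rpow_le_mul_abs hα ?_)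
        simpa using abs_sub_le_of_le_of_le (W_mem x).1 (W_mem x).2 (hv_mem x).1 (hv_mem x).2
    _ ≤ ENNReal.ofReal (k ^ (α - 1)) * ENNReal.ofReal (ε / k ^ (α - 1)) := by
        rw [lintegral_const_mul' _ _ ENNReal.ofReal_ne_top]
        gcongr
        exact W_lintegral_le.trans (ENNReal.ofReal_le_ofReal (min_le_right _ _))
    _ = ENNReal.ofReal ε := by
        rw [← ENNReal.ofReal_mul hk_rpow.le, mul_div_cancel₀ _ hk_rpow.ne']

lemma exists_isTestFunction_approx (hα : 1 ≤ α) (hw : Integrable w) (hw_nonneg : ∀ x, 0 ≤ w x)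
    (hε : 0 < ε) :
    ∃ W v : ℝ → ℝ, IsTestFunction W ∧ (∀ x, 0 ≤ W x) ∧ Integrable v ∧ (∀ x, |v x| ≤ |w x|) ∧
      ∫⁻ x, ENNReal.ofReal |W x - w x| ≤ ENNReal.ofReal ε ∧
      ∫⁻ x, ENNReal.ofReal |(|W x - v x| ^ α)| ≤ ENNReal.ofReal ε := by
  obtain ⟨k, hk, hkw⟩ := exists_lintegral_abs_min_const_sub_le hw hw_nonneg (half_pos hε)
  have v_mem : ∀ x, min (w x) k ∈ Icc 0 k :=
    fun x => ⟨le_min (hw_nonneg x) hk.le, min_le_right _ _⟩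
  have v_le : ∀ x, |min (w x) k| ≤ |w x| :=
    fun x => abs_le_abs_of_nonneg (v_mem x).1 (min_le_left _ _)
  have v_aemeasurable : AEMeasurable fun x => min (w x) k :=
    hw.aestronglyMeasurable.aemeasurable.min aemeasurable_const
  have v_int : Integrable fun x => min (w x) k :=
    hw.mono v_aemeasurable.aestronglyMeasurable (.of_forall v_le)
  obtain ⟨W, hW, hW_nonneg, hWv, hWv_rpow⟩ :=
    exists_isTestFunction_approx_bounded hα v_int hk v_mem (half_pos hε)
  have hWv_meas : AEMeasurable fun x => ENNReal.ofReal |W x - min (w x) k| :=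
    (hW.continuous.aemeasurable.sub v_aemeasurable).abs.ennreal_ofReal
  refine ⟨W, _, hW, hW_nonneg, v_int, v_le, ?_,
    hWv_rpow.trans (ENNReal.ofReal_le_ofReal (half_le_self hε.le))⟩
  calc ∫⁻ x, ENNReal.ofReal |W x - w x|
      ≤ ∫⁻ x, (ENNReal.ofReal |W x - min (w x) k| + ENNReal.ofReal |min (w x) k - w x|) := by
        refine lintegral_mono fun x => ?_
        rw [← ENNReal.ofReal_add (abs_nonneg _) (abs_nonneg _)]
        exact ENNReal.ofReal_le_ofReal (abs_sub_le _ _ _)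
    _ ≤ ENNReal.ofReal (ε / 2) + ENNReal.ofReal (ε / 2) := by
        rw [lintegral_add_left' hWv_meas]
        exact add_le_add hWv hkw
    _ = ENNReal.ofReal ε := by
        rw [← ENNReal.ofReal_add (by positivity) (by positivity), add_halves]

end WeightApproximation

section PrincipalValue

variable {f g : ℝ → ℝ} {r : ℝ} {A : NNReal}

lemma truncatedHil_sub (hf : Integrable f) (hg : Integrable g) (x : ℝ) {ε : ℝ} (hε : 0 < ε) :
    truncatedHil (f - g) x ε = truncatedHil f x ε - truncatedHil g x ε := by
  simp only [truncatedHil, Pi.sub_apply, sub_div]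
  exact integral_sub (integrableOn_div_sub hf x hε) (integrableOn_div_sub hg x hε)

lemma truncatedHil_const_mul (c : ℝ) (f : ℝ → ℝ) (x ε : ℝ) :
    truncatedHil (fun y => c * f y) x ε = c * truncatedHil f x ε := by
  simp only [truncatedHil, mul_div_assoc, integral_const_mul]

lemma Hil_sub (hf : Integrable f) (hg : Integrable g) {x : ℝ}
    (hfx : ∃ L, Tendsto (truncatedHil f x) (𝓝[>] 0) (𝓝 L))
    (hgx : ∃ L, Tendsto (truncatedHil g x) (𝓝[>] 0) (𝓝 L)) :
    Hil (f - g) x = Hil f x - Hil g x := by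
  refine Tendsto.limUnder_eq (Tendsto.congr' ?_
    ((tendsto_nhds_limUnder hfx).sub (tendsto_nhds_limUnder hgx)))
  filter_upwards [self_mem_nhdsWithin] with ε hε
  exact (truncatedHil_sub hf hg x hε).symm

lemma Hil_eq_Hil_of_not_tendsto {x y : ℝ}
    (hfx : ¬∃ L, Tendsto (truncatedHil f x) (𝓝[>] 0) (𝓝 L))
    (hgy : ¬∃ L, Tendsto (truncatedHil g y) (𝓝[>] 0) (𝓝 L)) :
    Hil f x = Hil g y := by
  have hlim : (fun L => map (truncatedHil f x) (𝓝[>] 0) ≤ 𝓝 L) =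
      fun L => map (truncatedHil g y) (𝓝[>] 0) ≤ 𝓝 L :=
    funext fun L => propext (iff_of_false (fun h => hfx ⟨L, h⟩) fun h => hgy ⟨L, h⟩)
  exact congrArg Classical.epsilon hlim

lemma exists_tendsto_truncatedHil_of_const_mul {c x : ℝ} (hc : c ≠ 0)
    (h : ∃ L, Tendsto (truncatedHil (fun y => c * f y) x) (𝓝[>] 0) (𝓝 L)) :
    ∃ L, Tendsto (truncatedHil f x) (𝓝[>] 0) (𝓝 L) := by
  obtain ⟨L, hL⟩ := h
  refine ⟨c⁻¹ * L, (hL.const_mul c⁻¹).congr fun ε => ?_⟩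
  rw [truncatedHil_const_mul, inv_mul_cancel_left₀ hc]

lemma HasWeakType.mul_volume_lt_abs_Hil_le (hA : HasWeakType r A) (hr : 0 < r)
    (hf : Integrable f) {t : ℝ} (ht : 0 < t) :
    ENNReal.ofReal t * volume {x | t < |Hil f x|} ≤ A * ∫⁻ x, ENNReal.ofReal |f x| := by
  have h_one : IsWeight fun _ => 1 := ⟨fun _ => zero_le_one, locallyIntegrable_const 1⟩
  have h_lintegral_le : ∫⁻ x, ENNReal.ofReal |f x| * Mr r (fun _ => 1) x ≤
      ∫⁻ x, ENNReal.ofReal |f x| := by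
    refine lintegral_mono fun x => mul_le_of_le_one_right' ?_
    simpa using Mr_le_ofReal hr (f := fun _ => 1) (K := 1) (by simp) x
  have h_weak := hA _ f h_one (h_lintegral_le.trans_lt hf.abs.lintegral_lt_top) t ht
  rw [ENNReal.ofReal_one, setLIntegral_one] at h_weak
  exact h_weak.trans (by gcongr)

/-- `Hil f x` is a fixed but unspecified number wherever the principal value does not exist. Scaling
`f` does not change that number, whereas it scales the right-hand side of the weak-type estimate:
either the number is `0`, or it is taken only on a null set. -/
lemma HasWeakType.ae_tendsto_truncatedHil_or_Hil_eq_zero (hA : HasWeakType r A) (hr : 0 < r)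
    (hf : Integrable f) :
    ∀ᵐ x, (∃ L, Tendsto (truncatedHil f x) (𝓝[>] 0) (𝓝 L)) ∨ Hil f x = 0 := by
  set B := {x | ¬∃ L, Tendsto (truncatedHil f x) (𝓝[>] 0) (𝓝 L)}
  by_cases hB : ∃ z ∈ B, Hil f z ≠ 0
  swap
  · push Not at hB
    exact .of_forall fun x => or_iff_not_imp_left.2 (hB x)
  obtain ⟨z, hz, hz_ne⟩ := hB
  have h_half : 0 < |Hil f z| / 2 := half_pos (abs_pos.2 hz_ne)
  have h_scale : ∀ t : ℝ, 0 < t → ENNReal.ofReal (|Hil f z| / 2) * volume B ≤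
      ENNReal.ofReal t * (A * ∫⁻ x, ENNReal.ofReal |f x|) := fun t ht => by
    have hsub : B ⊆ {x | |Hil f z| / 2 < |Hil (fun y => t * f y) x|} := fun x hx => by
      rw [mem_ofPred_eq, Hil_eq_Hil_of_not_tendsto
        (fun h => hx (exists_tendsto_truncatedHil_of_const_mul ht.ne' h)) hz]
      exact half_lt_self (abs_pos.2 hz_ne)
    calc _ ≤ ENNReal.ofReal (|Hil f z| / 2) *
          volume {x | |Hil f z| / 2 < |Hil (fun y => t * f y) x|} := by gcongr
      _ ≤ A * ∫⁻ x, ENNReal.ofReal |t * f x| :=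
          hA.mul_volume_lt_abs_Hil_le hr (hf.const_mul t) h_half
      _ = ENNReal.ofReal t * (A * ∫⁻ x, ENNReal.ofReal |f x|) := by
          simp only [abs_mul, abs_of_pos ht, ENNReal.ofReal_mul ht.le]
          rw [lintegral_const_mul' _ _ ENNReal.ofReal_ne_top, mul_left_comm]
  have h_lim : Tendsto (fun t => ENNReal.ofReal t * (A * ∫⁻ x, ENNReal.ofReal |f x|)) (𝓝[>] 0)
      (𝓝 (ENNReal.ofReal 0 * (A * ∫⁻ x, ENNReal.ofReal |f x|))) :=
    ENNReal.Tendsto.mul_const (ENNReal.tendsto_ofReal (tendsto_id.mono_left nhdsWithin_le_nhds))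
      (.inr (ENNReal.mul_ne_top ENNReal.coe_ne_top hf.abs.lintegral_lt_top.ne))
  have hB_null : volume B = 0 := by
    have := ge_of_tendsto h_lim (eventually_mem_nhdsWithin.mono h_scale)
    simpa [h_half.not_ge] using this
  filter_upwards [measure_eq_zero_iff_ae_notMem.1 hB_null] with x hx
  exact .inl (not_not.1 hx)

end PrincipalValue

section AlmostEverywhereConvergence

variable {f : ℝ → ℝ} {F : ℕ → ℝ → ℝ} {r α : ℝ} {A : NNReal}

lemma ae_tendsto_zero_of_mul_measure_lt_le {X : Type*} [MeasurableSpace X] {μ : Measure X}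
    {G : ℕ → X → ℝ≥0∞} {C : ℝ≥0∞} (hC : C ≠ ⊤)
    (h : ∀ (n : ℕ) (t : ℝ), 0 < t → ENNReal.ofReal t * μ {x | ENNReal.ofReal t < G n x} ≤
      C * ENNReal.ofReal ((1 / 4) ^ n)) :
    ∀ᵐ x ∂μ, Tendsto (fun n => G n x) atTop (𝓝 0) := by
  have measure_le : ∀ n : ℕ, μ {x | ENNReal.ofReal ((1 / 2) ^ n) < G n x} ≤
      C * ENNReal.ofReal ((1 / 2) ^ n) := fun n => by
    have h_pos : 0 < ENNReal.ofReal ((1 / 2) ^ n) := ENNReal.ofReal_pos.2 (by positivity)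
    rw [← ENNReal.mul_le_mul_iff_right h_pos.ne' ENNReal.ofReal_ne_top]
    refine (h n _ (by positivity)).trans_eq ?_
    rw [mul_left_comm, ← ENNReal.ofReal_mul (by positivity), ← mul_pow]
    norm_num
  have tsum_ne_top : ∑' n : ℕ, C * ENNReal.ofReal ((1 / 2) ^ n) ≠ ⊤ := by
    rw [ENNReal.tsum_mul_left, ← ENNReal.ofReal_tsum_of_nonneg (fun n => by positivity)
      summable_geometric_two]
    exact ENNReal.mul_ne_top hC ENNReal.ofReal_ne_top
  have h_pow : Tendsto (fun n : ℕ => ENNReal.ofReal ((1 / 2) ^ n)) atTop (𝓝 0) := by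
    simpa using ENNReal.tendsto_ofReal
      (tendsto_pow_atTop_nhds_zero_of_lt_one (r := (1 / 2 : ℝ)) (by norm_num) (by norm_num))
  filter_upwards [ae_eventually_notMem (ne_top_of_le_ne_top tsum_ne_top
    (ENNReal.tsum_le_tsum measure_le))] with x hx
  exact tendsto_of_tendsto_of_tendsto_of_le_of_le' tendsto_const_nhds h_pow
    (.of_forall fun n => bot_le) (hx.mono fun n hn => not_lt.1 hn)

lemma tendsto_iff_tendsto_ofReal_abs_sub {u : ℕ → ℝ} {a : ℝ} :
    Tendsto u atTop (𝓝 a) ↔ Tendsto (fun n => ENNReal.ofReal |u n - a|) atTop (𝓝 0) := by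
  simp only [tendsto_iff_edist_tendsto_0, edist_dist, Real.dist_eq]

lemma ae_tendsto_of_lintegral_abs_sub_le (hf : AEMeasurable f) (hF : ∀ n, AEMeasurable (F n))
    (hFf : ∀ n, ∫⁻ x, ENNReal.ofReal |F n x - f x| ≤ ENNReal.ofReal ((1 / 4) ^ n)) :
    ∀ᵐ x, Tendsto (fun n => F n x) atTop (𝓝 (f x)) := by
  simp only [tendsto_iff_tendsto_ofReal_abs_sub]
  refine ae_tendsto_zero_of_mul_measure_lt_le ENNReal.one_ne_top fun n t _ => ?_
  calc ENNReal.ofReal t * volume {x | ENNReal.ofReal t < ENNReal.ofReal |F n x - f x|}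
      ≤ ENNReal.ofReal t * volume {x | ENNReal.ofReal t ≤ ENNReal.ofReal |F n x - f x|} := by
        gcongr
        exact le_of_lt
    _ ≤ ∫⁻ x, ENNReal.ofReal |F n x - f x| :=
        mul_meas_ge_le_lintegral₀ ((hF n).sub hf).abs.ennreal_ofReal _
    _ ≤ 1 * ENNReal.ofReal ((1 / 4) ^ n) := (hFf n).trans_eq (one_mul _).symm

lemma ae_tendsto_HLMax_zero
    (hF : ∀ n, ∫⁻ x, ENNReal.ofReal |F n x| ≤ ENNReal.ofReal ((1 / 4) ^ n)) :
    ∀ᵐ x, Tendsto (fun n => HLMax (F n) x) atTop (𝓝 0) := by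
  refine ae_tendsto_zero_of_mul_measure_lt_le (C := 2) ENNReal.ofNat_ne_top fun n t _ => ?_
  exact (mul_volume_lt_HLMax_le _ _).trans (by gcongr; exact hF n)

lemma ae_tendsto_Mr_zero (hα : 0 < α)
    (hF : ∀ n, ∫⁻ x, ENNReal.ofReal |(|F n x| ^ α)| ≤ ENNReal.ofReal ((1 / 4) ^ n)) :
    ∀ᵐ x, Tendsto (fun n => Mr α (F n) x) atTop (𝓝 0) := by
  filter_upwards [ae_tendsto_HLMax_zero hF] with x hx
  have := (ENNReal.continuous_rpow_const (y := 1 / α)).tendsto 0 |>.comp hx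
  rwa [ENNReal.zero_rpow_of_pos (by positivity)] at this

lemma HasWeakType.ae_tendsto_Hil_or_Hil_eq_zero (hA : HasWeakType r A) (hr : 0 < r)
    (hf : Integrable f) (hF : ∀ n, IsTestFunction (F n))
    (hFf : ∀ n, ∫⁻ x, ENNReal.ofReal |F n x - f x| ≤ ENNReal.ofReal ((1 / 4) ^ n)) :
    ∀ᵐ x, Tendsto (fun n => Hil (F n) x) atTop (𝓝 (Hil f x)) ∨ Hil f x = 0 := by
  have h_sub : ∀ᵐ x, Tendsto (fun n => ENNReal.ofReal |Hil (F n - f) x|) atTop (𝓝 0) := by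
    refine ae_tendsto_zero_of_mul_measure_lt_le (C := A) ENNReal.coe_ne_top fun n t ht => ?_
    simp only [ENNReal.ofReal_lt_ofReal_iff_of_nonneg ht.le]
    exact (hA.mul_volume_lt_abs_Hil_le hr ((hF n).integrable.sub hf) ht).trans
      (by gcongr; exact hFf n)
  filter_upwards [h_sub, hA.ae_tendsto_truncatedHil_or_Hil_eq_zero hr hf] with x hx hfx
  refine hfx.imp_left fun hfx => tendsto_iff_tendsto_ofReal_abs_sub.2 (hx.congr fun n => ?_)
  rw [Hil_sub (hF n).integrable hf ⟨_, (hF n).tendsto_truncatedHil x⟩ hfx]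

lemma ae_eq_zero_of_Mr_eq_zero (hα : 0 < α) (hf : AEMeasurable f) :
    ∀ᵐ x, Mr α f x = 0 → f x = 0 := by
  by_cases h : ∃ z, Mr α f z = 0
  swap
  · exact .of_forall fun x hx => absurd ⟨x, hx⟩ h
  obtain ⟨z, hz⟩ := h
  have hz' := (ENNReal.rpow_eq_zero_iff_of_pos (one_div_pos.2 hα)).1 hz
  filter_upwards [ae_eq_zero_of_HLMax_eq_zero (hf.abs.pow_const α) hz'] with x hx _
  exact abs_eq_zero.1 ((Real.rpow_eq_zero (abs_nonneg _) hα.ne').1 hx)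

end AlmostEverywhereConvergence

section Extrapolation

variable {w : ℝ → ℝ} {W v : ℕ → ℝ → ℝ} {r : ℝ} {A : NNReal}

lemma measurable_hilRatioIntegrand (hw : IsTestFunction w) :
    Measurable (hilRatioIntegrand r w) :=
  ((hw.measurable_Hil.abs.ennreal_ofReal.div ((measurable_Mr _ w).pow_const _)).pow_const 2).mul
    (hw.continuous.measurable.pow_const _).ennreal_ofReal

lemma sq_div_rpow_mul_rpow_le_liminf {α β a b : ℝ} {u y : ℕ → ℝ} {e M : ℕ → ℝ≥0∞} {m : ℝ≥0∞}
    (hα : 0 ≤ α) (hβ : 0 < β) (hm : m ≠ 0) (hu : Tendsto u atTop (𝓝 a))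
    (hy : Tendsto y atTop (𝓝 b)) (he : Tendsto e atTop (𝓝 0)) (hM : ∀ n, M n ≤ m + e n) :
    (ENNReal.ofReal |a| / m ^ β) ^ 2 * ENNReal.ofReal (b ^ α) ≤
      liminf (fun n => (ENNReal.ofReal |u n| / M n ^ β) ^ 2 * ENNReal.ofReal (y n ^ α)) atTop := by
  have hmβ : m ^ β ≠ 0 := fun h => hm ((ENNReal.rpow_eq_zero_iff_of_pos hβ).1 h)
  have h_denom : Tendsto (fun n => (m + e n) ^ β) atTop (𝓝 (m ^ β)) := by
    simpa using (tendsto_const_nhds.add he).ennrpow_const β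
  have h_ratio := ENNReal.Tendsto.div (ENNReal.tendsto_ofReal hu.abs) (.inr hmβ) h_denom
    (.inr ENNReal.ofReal_ne_top)
  have h_prod := ENNReal.Tendsto.mul (ENNReal.Tendsto.pow (n := 2) h_ratio)
    (.inr ENNReal.ofReal_ne_top) (ENNReal.tendsto_ofReal (hy.rpow_const (.inr hα)))
    (.inr (ENNReal.pow_ne_top (ENNReal.div_ne_top ENNReal.ofReal_ne_top hmβ)))
  rw [← h_prod.liminf_eq]
  refine liminf_le_liminf (.of_forall fun n => ?_)
  gcongr
  exact hM n

lemma one_le_div_two_sub (hr : 1 ≤ r) (hr2 : r < 2) : 1 ≤ r / (2 - r) := by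
  rw [le_div_iff₀ (by linarith)]
  linarith

lemma hilRatioIntegrand_le_liminf (hr : 1 ≤ r) (hr2 : r < 2)
    (hW : ∀ n, AEMeasurable (W n)) (hv : ∀ n, AEMeasurable (v n)) (hvw : ∀ n x, |v n x| ≤ |w x|)
    {x : ℝ} (hMr : Mr (r / (2 - r)) w x ≠ 0)
    (h_Hil : Tendsto (fun n => Hil (W n) x) atTop (𝓝 (Hil w x)))
    (h_weight : Tendsto (fun n => W n x) atTop (𝓝 (w x)))
    (h_max : Tendsto (fun n => Mr (r / (2 - r)) (W n - v n) x) atTop (𝓝 0)) :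
    hilRatioIntegrand r w x ≤ liminf (fun n => hilRatioIntegrand r (W n) x) atTop := by
  have hα := one_le_div_two_sub hr hr2
  refine sq_div_rpow_mul_rpow_le_liminf (by linarith) (by positivity) hMr h_Hil h_weight h_max
    fun n => ?_
  calc Mr (r / (2 - r)) (W n) x = Mr (r / (2 - r)) (v n + (W n - v n)) x := by
        rw [add_sub_cancel]
    _ ≤ Mr (r / (2 - r)) (v n) x + Mr (r / (2 - r)) (W n - v n) x :=
        Mr_add_le hα (hv n) ((hW n).sub (hv n)) x
    _ ≤ Mr (r / (2 - r)) w x + Mr (r / (2 - r)) (W n - v n) x := by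
        gcongr
        exact Mr_mono (by linarith) (hvw n) x

lemma HasWeakType.exists_seq_hilRatioIntegrand_le_liminf (hA : HasWeakType r A) (hr : 1 ≤ r)
    (hr2 : r < 2) (hw_nonneg : ∀ x, 0 ≤ w x) (hw : Integrable w) :
    ∃ W : ℕ → ℝ → ℝ, (∀ n, IsTestFunction (W n)) ∧ (∀ n x, 0 ≤ W n x) ∧
      (∀ n, ∫⁻ x, ENNReal.ofReal |W n x - w x| ≤ ENNReal.ofReal ((1 / 4) ^ n)) ∧
      ∀ᵐ x, hilRatioIntegrand r w x ≤ liminf (fun n => hilRatioIntegrand r (W n) x) atTop := by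
  have hα := one_le_div_two_sub hr hr2
  have hw_meas : AEMeasurable w := hw.aestronglyMeasurable.aemeasurable
  choose W v hW hW_nonneg hv hvw hWw hWv using fun n : ℕ =>
    exists_isTestFunction_approx hα hw hw_nonneg (ε := (1 / 4) ^ n) (by positivity)
  have hW_meas : ∀ n, AEMeasurable (W n) := fun n => (hW n).continuous.aemeasurable
  refine ⟨W, hW, hW_nonneg, hWw, ?_⟩
  filter_upwards [hA.ae_tendsto_Hil_or_Hil_eq_zero (by linarith) hw hW hWw,
    ae_tendsto_of_lintegral_abs_sub_le hw_meas hW_meas hWw,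
    ae_tendsto_Mr_zero (F := fun n => W n - v n) (by linarith) hWv,
    ae_eq_zero_of_Mr_eq_zero (α := r / (2 - r)) (by linarith) hw_meas]
    with x h_Hil h_weight h_max h_zero
  obtain h_Hil | h_Hil := h_Hil
  swap
  · simp [hilRatioIntegrand, h_Hil]
  by_cases hMr : Mr (r / (2 - r)) w x = 0
  · simp [hilRatioIntegrand, h_zero hMr, Real.zero_rpow (by linarith : r / (2 - r) ≠ 0)]
  exact hilRatioIntegrand_le_liminf hr hr2 hW_meas
    (fun n => (hv n).aestronglyMeasurable.aemeasurable) hvw hMr h_Hil h_weight h_max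

lemma lintegral_ofReal_le_add {f g : ℝ → ℝ} {ε : ℝ≥0∞} (hf : AEMeasurable f)
    (hf_nonneg : ∀ x, 0 ≤ f x) (hfg : ∫⁻ x, ENNReal.ofReal |g x - f x| ≤ ε) :
    ∫⁻ x, ENNReal.ofReal (g x) ≤ (∫⁻ x, ENNReal.ofReal (f x)) + ε := by
  refine le_trans (lintegral_mono fun x => ?_)
    ((lintegral_add_left' hf.ennreal_ofReal _).trans_le (add_le_add_right hfg _))
  rw [← ENNReal.ofReal_add (hf_nonneg x) (abs_nonneg _)]
  exact ENNReal.ofReal_le_ofReal (by linarith [le_abs_self (g x - f x)])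

theorem lintegral_hilRatioIntegrand_le (hA : HasWeakType r A) (hr : 1 ≤ r) (hr2 : r < 2)
    (hw_nonneg : ∀ x, 0 ≤ w x) (hw : Integrable w) :
    ∫⁻ x, hilRatioIntegrand r w x ≤ (16 * A) ^ 2 * ∫⁻ x, ENNReal.ofReal (w x) := by
  obtain ⟨W, hW, hW_nonneg, hWw, h_liminf⟩ :=
    hA.exists_seq_hilRatioIntegrand_le_liminf hr hr2 hw_nonneg hw
  have h_bound : ∀ n, ∫⁻ x, hilRatioIntegrand r (W n) x ≤
      (16 * A) ^ 2 * ((∫⁻ x, ENNReal.ofReal (w x)) + ENNReal.ofReal ((1 / 4) ^ n)) := fun n =>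
    (lintegral_hilRatioIntegrand_le_of_isTestFunction hA hr hr2 (hW n) (hW_nonneg n)).trans
      (by
        gcongr
        exact lintegral_ofReal_le_add hw.aestronglyMeasurable.aemeasurable hw_nonneg (hWw n))
  have h_lim : Tendsto (fun n : ℕ => (16 * A : ℝ≥0∞) ^ 2 *
      ((∫⁻ x, ENNReal.ofReal (w x)) + ENNReal.ofReal ((1 / 4) ^ n))) atTop
      (𝓝 ((16 * A) ^ 2 * ((∫⁻ x, ENNReal.ofReal (w x)) + ENNReal.ofReal 0))) :=
    ENNReal.Tendsto.const_mul (tendsto_const_nhds.add (ENNReal.tendsto_ofReal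
      (tendsto_pow_atTop_nhds_zero_of_lt_one (by norm_num) (by norm_num)))) (.inr (by finiteness))
  rw [ENNReal.ofReal_zero, add_zero] at h_lim
  calc ∫⁻ x, hilRatioIntegrand r w x
      ≤ ∫⁻ x, liminf (fun n => hilRatioIntegrand r (W n) x) atTop := lintegral_mono_ae h_liminf
    _ ≤ liminf (fun n => ∫⁻ x, hilRatioIntegrand r (W n) x) atTop :=
        lintegral_liminf_le fun n => measurable_hilRatioIntegrand (hW n)
    _ ≤ liminf (fun n : ℕ => (16 * A : ℝ≥0∞) ^ 2 *
          ((∫⁻ x, ENNReal.ofReal (w x)) + ENNReal.ofReal ((1 / 4) ^ n))) atTop :=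
        liminf_le_liminf (.of_forall h_bound)
    _ = (16 * A) ^ 2 * ∫⁻ x, ENNReal.ofReal (w x) := h_lim.liminf_eq

end Extrapolation

lemma integrable_of_isWeight_of_forall_notMem_eq_zero {w : ℝ → ℝ} (hw : IsWeight w) {s : Set ℝ}
    (hs : IsCompact s) (hws : ∀ x, x ∉ s → w x = 0) : Integrable w :=
  (integrableOn_iff_integrable_of_support_subset fun x hx => not_imp_comm.1 (hws x) hx).1
    (hw.2.integrableOn_isCompact hs)

lemma setLIntegral_ofReal_eq_lintegral {w : ℝ → ℝ} {s : Set ℝ} (hws : ∀ x, x ∉ s → w x = 0) :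
    ∫⁻ x in s, ENNReal.ofReal (w x) = ∫⁻ x, ENNReal.ofReal (w x) :=
  setLIntegral_eq_of_support_subset fun x hx =>
    not_imp_comm.1 (hws x) fun h => hx (by simp only [h, ENNReal.ofReal_zero])

theorem statement7_general :
    ∃ c : ℝ, 0 < c ∧ ∀ r A : ℝ, 1 ≤ r → r < 2 →
      (∀ w f : ℝ → ℝ, IsWeight w →
          (∫⁻ x, ENNReal.ofReal |f x| * Mr r w x) < ⊤ →
          ∀ lam : ℝ, 0 < lam →
            ENNReal.ofReal lam *
                (∫⁻ x in {x : ℝ | lam < |Hil f x|}, ENNReal.ofReal (w x))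
              ≤ ENNReal.ofReal A * ∫⁻ x, ENNReal.ofReal |f x| * Mr r w x) →
      ∀ w : ℝ → ℝ, (∀ x, 0 ≤ w x) → Integrable w →
        (∫⁻ x, (ENNReal.ofReal |Hil w x| /
                Mr (r / (2 - r)) w x ^ ((r / (2 - r)) / r)) ^ 2 *
              ENNReal.ofReal (w x ^ (r / (2 - r))))
          ≤ ENNReal.ofReal (c * A ^ 2) * ∫⁻ x, ENNReal.ofReal (w x) := by
  refine ⟨256, by norm_num, fun r A hr hr2 hA w hw_nonneg hw => ?_⟩
  have h_const : (16 * ENNReal.ofReal A) ^ 2 ≤ ENNReal.ofReal (256 * A ^ 2) := by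
    rw [mul_pow, ENNReal.ofReal_mul (by norm_num), ← sq_abs A, ENNReal.ofReal_pow (abs_nonneg A)]
    gcongr
    · norm_num
    · exact le_abs_self A
  exact (lintegral_hilRatioIntegrand_le (A := A.toNNReal) hA hr hr2 hw_nonneg hw).trans
    (mul_le_mul_left h_const _)

/-- **Lemma 3.1, extrapolation.** Assume for `1 < r < 2` the weak
type bound `λ w({|Hf| > λ}) ≤ A_r ∫ |f| M_r w` for all weights `w` and all `f`
with `∫ |f| M_r w < ∞`. With `α_r = r/(2−r)`, there is an absolute constant
`c > 0` (independent of `r`) such that for every weight `w` supported in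
`[0,1]`, `∫_0^1 (|Hw|/(M_{α_r} w)^{α_r/r})^2 w^{α_r} ≤ c A_r^2 ∫_0^1 w`. -/
theorem statement7 :
    ∃ c : ℝ, 0 < c ∧ ∀ r A : ℝ, 1 < r → r < 2 → 0 < A →
      (∀ w f : ℝ → ℝ, IsWeight w →
          (∫⁻ x, ENNReal.ofReal |f x| * Mr r w x) < ⊤ →
          ∀ lam : ℝ, 0 < lam →
            ENNReal.ofReal lam *
                (∫⁻ x in {x : ℝ | lam < |Hil f x|}, ENNReal.ofReal (w x))
              ≤ ENNReal.ofReal A * ∫⁻ x, ENNReal.ofReal |f x| * Mr r w x) →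
      ∀ w : ℝ → ℝ, IsWeight w → (∀ x : ℝ, x ∉ Icc (0:ℝ) 1 → w x = 0) →
        (∫⁻ x in Icc (0:ℝ) 1,
            (ENNReal.ofReal |Hil w x| /
                Mr (r / (2 - r)) w x ^ ((r / (2 - r)) / r)) ^ 2 *
              ENNReal.ofReal (w x ^ (r / (2 - r))))
          ≤ ENNReal.ofReal (c * A ^ 2) *
              ∫⁻ x in Icc (0:ℝ) 1, ENNReal.ofReal (w x) := by
  obtain ⟨c, hc, h⟩ := statement7_general
  refine ⟨c, hc, fun r A hr hr2 _ hA w hw hw_supp => ?_⟩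
  rw [setLIntegral_ofReal_eq_lintegral hw_supp]
  exact (setLIntegral_le_lintegral _ _).trans (h r A hr.le hr2 hA w hw.1
    (integrable_of_isWeight_of_forall_notMem_eq_zero hw isCompact_Icc hw_supp))

end RT

end
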